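/- arXiv:2012.03174 — 5 statements merged into one kernel-verified Lean document; each statement's English description precedes it below -/
import Mathlib

section
/- Let 𝒳 be a countable attribute set, let τ ≥ 1, and let H be a connected attributed graph on τ+1 vertices (with attributes in 𝒳) whose underlying graph admits the covering sequence (r_1, ..., r_τ). Then for all attributed graphs G_1, G_2 on n vertices with attributes in 𝒳: if the induced subgraph counts satisfy C(G_1; H) ≠ C(G_2; H), then Enc_{(r_1,...,r_τ)}(G_1) ≠ Enc_{(r_1,...,r_τ)}(G_2). In other words, the RNP encoding with recursion parameters (r_1, ..., r_τ) determines the number of induced copies of every connected graph H admitting that covering sequence. -/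
/-!
Unordered induced copies of `H` in `G` and ordered ones, i.e. attribute-preserving induced
embeddings `H → G`, carry the same information: the automorphism group of `(H, Y)` acts freely on
the embeddings, with the copies as orbits, so the number of embeddings is a fixed positive multiple
of `C(G; H)` (`card_isEmb`).

Reindex `H` so that its covering sequence is `0, 1, 2, …`. The number of embeddings that send `0` to
`v` is then a function of the encoding of `v` alone (`exists_rootedCount`). By induction on the list
of radii: such an embedding exists only if `v` has the attribute of `0`, and it is then the same
thing as an embedding of `H` minus `0` into the punctured neighbourhood of `v`, where the augmented
attribute records which vertices are adjacent to the root (`consEquiv`). The covering condition is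
what forces the rest of the copy to lie in the ball of radius `r` around `v`. Embeddings into the
punctured neighbourhood are counted by summing over the image of their own root, hence are
determined by the multiset stored in the encoding. Summing over `v` recovers the total number of
embeddings from the graph encoding.
-/

open Classical

noncomputable section

/-- The type of RNP vertex encodings with `τ` recursion levels and attribute type `𝒳`:
at level `0` an encoding is just an attribute, and at level `τ+1` it is the pair of the
vertex attribute and the multiset of level-`τ` encodings (with `Bool`-augmented attributes)
of the vertices of the punctured neighborhood. -/
def RNPType : ℕ → Type → Type
  | 0 => fun 𝒳 => 𝒳
  | (τ + 1) => fun 𝒳 => 𝒳 × Multiset (RNPType τ (𝒳 × Bool))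

/-- Auxiliary fully-explicit version of the RNP vertex encoding `h_G(v; rs)`:
for the empty sequence it is the attribute `X v`; for `r :: rs` it is the pair of `X v`
and the multiset of the `rs`-encodings (computed in the induced subgraph on
`N_r(v) \ {v}` with attributes augmented by the indicator of adjacency to `v`)
of all vertices of that induced subgraph. -/
noncomputable def rnpHAux : (rs : List ℕ) → (V : Type) → (inst : Fintype V) → (𝒳 : Type) →
    (G : SimpleGraph V) → (X : V → 𝒳) → V → RNPType rs.length 𝒳
  | [], _V, _inst, _𝒳, _G, X, v => X v
  | (r :: rs), V, inst, 𝒳, G, X, v =>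
      letI : Fintype V := inst
      -- the punctured ball `N_r(v) \ {v}`
      let S : Set V := {u | (∃ w : G.Walk v u, w.length ≤ r) ∧ u ≠ v}
      letI instS : Fintype S := Fintype.ofFinite S
      (X v, (Finset.univ : Finset S).val.map
        (fun u => rnpHAux rs S instS (𝒳 × Bool) (G.induce S)
          (fun w => ((X w.1, decide (G.Adj w.1 v)) : 𝒳 × Bool)) u))

/-- The recursive neighborhood pooling (RNP) vertex encoding `h_G(v; rs)`. -/
noncomputable def rnpH {V 𝒳 : Type} [inst : Fintype V] (rs : List ℕ)
    (G : SimpleGraph V) (X : V → 𝒳) (v : V) : RNPType rs.length 𝒳 :=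
  rnpHAux rs V inst 𝒳 G X v

/-- The RNP graph encoding `Enc_{rs}(G) = {{ h_G(v; rs) : v ∈ V(G) }}`. -/
noncomputable def rnpEnc {V 𝒳 : Type} [Fintype V] (G : SimpleGraph V) (X : V → 𝒳)
    (rs : List ℕ) : Multiset (RNPType rs.length 𝒳) :=
  (Finset.univ : Finset V).val.map (fun v => rnpH rs G X v)

/-- Attribute-preserving isomorphism of attributed graphs. -/
def AttrIso {V W 𝒳 : Type} (G : SimpleGraph V) (X : V → 𝒳)
    (H : SimpleGraph W) (Y : W → 𝒳) : Prop :=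
  ∃ φ : G ≃g H, ∀ v : V, Y (φ v) = X v

/-- Induced subgraph count `C(G;H)` for attributed graphs: the number of vertex subsets
`S` of `G` such that the induced attributed subgraph `G(S)` is isomorphic to `(H, Y)`. -/
noncomputable def inducedCount {V W 𝒳 : Type} (G : SimpleGraph V) (X : V → 𝒳)
    (H : SimpleGraph W) (Y : W → 𝒳) : ℕ :=
  Nat.card {S : Set V // AttrIso (G.induce S) (fun u => X u.1) H Y}

/-- Non-induced subgraph count `C̄(G;H)` for attributed graphs: the number of pairs of a
vertex subset `S` of `G` and a subgraph of the induced subgraph `G(S)` on the same vertex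
set `S` that is isomorphic to `(H, Y)` as an attributed graph. -/
noncomputable def subgraphCount {V W 𝒳 : Type} (G : SimpleGraph V) (X : V → 𝒳)
    (H : SimpleGraph W) (Y : W → 𝒳) : ℕ :=
  Nat.card {p : (S : Set V) × SimpleGraph ↥S //
    p.2 ≤ G.induce p.1 ∧ AttrIso p.2 (fun u => X u.1) H Y}

/-- The tail set `{σ i, σ (i+1), ..., σ τ}` of a vertex ordering `σ`. -/
def coverSet {τ : ℕ} (σ : Equiv.Perm (Fin (τ + 1))) (i : Fin (τ + 1)) :
    Set (Fin (τ + 1)) :=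
  σ '' {j | i ≤ j}

/-- `σ` is a vertex covering sequence for `H` with respect to `r`: for every
`i ∈ {1, ..., τ}`, the induced subgraph `H_i` of `H` on `S_i = {σ i, ..., σ (τ+1)}` is
connected and every vertex of `S_i` is at distance at most `r i` from `σ i` in `H_i`. -/
def IsVertexCoveringSeq {τ : ℕ} (H : SimpleGraph (Fin (τ + 1))) (r : Fin τ → ℕ)
    (σ : Equiv.Perm (Fin (τ + 1))) : Prop :=
  ∀ i : Fin τ,
    (H.induce (coverSet σ i.castSucc)).Connected ∧
    ∀ u : coverSet σ i.castSucc,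
      (H.induce (coverSet σ i.castSucc)).dist
        ⟨σ i.castSucc, ⟨i.castSucc, Set.mem_setOf_eq ▸ le_refl _, rfl⟩⟩ u ≤ r i

/-- `H` admits the covering sequence `r` iff some vertex ordering is a vertex covering
sequence with respect to `r`. -/
def AdmitsCoveringSeq {τ : ℕ} (H : SimpleGraph (Fin (τ + 1))) (r : Fin τ → ℕ) : Prop :=
  ∃ σ : Equiv.Perm (Fin (τ + 1)), IsVertexCoveringSeq H r σ

end

/-- `f` is an attribute-preserving induced embedding of `(H, Y)` into `(G, X)`. -/
def IsEmb {V W 𝒳 : Type} (G : SimpleGraph V) (X : V → 𝒳) (H : SimpleGraph W) (Y : W → 𝒳)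
    (f : W → V) : Prop :=
  Function.Injective f ∧ (∀ a b, G.Adj (f a) (f b) ↔ H.Adj a b) ∧ ∀ a, X (f a) = Y a

/-- The identity ordering of the vertices of `H` is a covering sequence for the list `rs`, phrased
with walks: every `u ≥ i` is reached from `i` by a walk through vertices `≥ i` of length at
most `rs[i]`. -/
def Covers (rs : List ℕ) (H : SimpleGraph (Fin (rs.length + 1))) : Prop :=
  ∀ i : Fin rs.length, ∀ u, i.castSucc ≤ u →
    ∃ w : H.Walk i.castSucc u, w.length ≤ rs.get i ∧ ∀ x ∈ w.support, i.castSucc ≤ x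

/-- A walk of `H` through the range of an injective `f` lifts, vertex by vertex, to the graph pulled
back along `f`. -/
lemma exists_walk_comap {α β : Type} (f : α → β) (hf : Function.Injective f) (H : SimpleGraph β)
    {x y : β} (w : H.Walk x y) : ∀ a b, f a = x → f b = y → (∀ z ∈ w.support, z ∈ Set.range f) →
      ∃ w' : (H.comap f).Walk a b, w'.length = w.length ∧ w'.support.map f = w.support := by
  induction w with
  | nil =>
    intro a b ha hb _
    obtain rfl := hf (ha.trans hb.symm)
    exact ⟨.nil, rfl, by simp [ha]⟩
  | @cons x z y h p ih =>
    intro a b ha hb hs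
    obtain ⟨c, hc⟩ := hs z (by simp)
    obtain ⟨w', h1, h2⟩ := ih c b hc hb (fun t ht => hs t (by simp [ht]))
    have hadj : (H.comap f).Adj a c := by simpa [ha, hc] using h
    exact ⟨.cons hadj w', by simp [h1], by simp [h2, ha]⟩

lemma Covers.tail {r : ℕ} {rs : List ℕ} {H : SimpleGraph (Fin ((r :: rs).length + 1))}
    (h : Covers (r :: rs) H) :
    Covers rs (SimpleGraph.comap (Fin.succ : Fin (rs.length + 1) → Fin (rs.length + 1 + 1)) H) := by
  intro i u hu
  obtain ⟨w, hl, hs⟩ := h i.succ u.succ (Fin.succ_le_succ_iff.2 hu)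
  have hpos : ∀ z ∈ w.support, z ∈ Set.range (Fin.succ : Fin (rs.length + 1) → _) := by
    intro z hz
    refine ⟨Fin.pred z ?_, Fin.succ_pred _ _⟩
    rintro rfl
    exact absurd (hs _ hz) (by simp)
  obtain ⟨w', h1, h2⟩ := exists_walk_comap Fin.succ (Fin.succ_injective _) H w i.castSucc u
    rfl rfl hpos
  refine ⟨w', h1.trans_le hl, fun x hx => ?_⟩
  have : x.succ ∈ w.support := h2 ▸ List.mem_map_of_mem hx
  exact Fin.succ_le_succ_iff.1 (hs _ this)

/-- The punctured ball `N_r(v) \ {v}` of `G`. -/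
abbrev pball {V : Type} (G : SimpleGraph V) (r : ℕ) (v : V) : Set V :=
  {u | (∃ w : G.Walk v u, w.length ≤ r) ∧ u ≠ v}

/-- If every vertex of `H` is within distance `r` of `0`, then, provided `v` has the attribute
of `0`, embeddings of `H` with `0 ↦ v` are the same as embeddings of `H` minus `0` into the
punctured `r`-ball of `v` that respect the attributes augmented by adjacency to the root. -/
noncomputable def consEquiv {V 𝒳 : Type} {m : ℕ} (G : SimpleGraph V) (X : V → 𝒳)
    (H : SimpleGraph (Fin (m + 1 + 1))) (Y : Fin (m + 1 + 1) → 𝒳) (r : ℕ) (v : V)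
    (hr : ∀ u, ∃ w : H.Walk 0 u, w.length ≤ r) (hv : X v = Y 0) :
    {f // IsEmb G X H Y f ∧ f 0 = v} ≃
      {g // IsEmb (G.induce (pball G r v))
        (fun w => ((X w.1, decide (G.Adj w.1 v)) : 𝒳 × Bool)) (H.comap Fin.succ)
        (fun i => (Y i.succ, decide (H.Adj i.succ 0))) g} where
  toFun f := ⟨fun i => ⟨f.1 i.succ, by
      obtain ⟨f, ⟨hi, ha, hX⟩, rfl⟩ := f
      obtain ⟨w, hw⟩ := hr i.succ
      refine ⟨⟨w.map ⟨f, fun {a b} h => (ha a b).2 h⟩, by simpa using hw⟩, fun h => ?_⟩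
      exact absurd (hi h) (Fin.succ_ne_zero i)⟩, by
    obtain ⟨f, ⟨hi, ha, hX⟩, rfl⟩ := f
    refine ⟨fun a b h => ?_, fun a b => ?_, fun a => ?_⟩
    · exact Fin.succ_injective _ (hi (Subtype.ext_iff.1 h))
    · simp [ha]
    · simp [ha, hX]⟩
  invFun g := ⟨Fin.cons v (fun i => (g.1 i).1), by
    obtain ⟨g, hi, ha, hX⟩ := g
    have hX' : ∀ a, X (g a).1 = Y a.succ ∧ (G.Adj (g a).1 v ↔ H.Adj a.succ 0) := fun a => by
      simpa using hX a
    refine ⟨⟨?_, ?_, ?_⟩, rfl⟩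
    · refine Fin.cons_injective_iff.2 ⟨?_, Subtype.val_injective.comp hi⟩
      rintro ⟨i, h⟩
      exact (g i).2.2 h
    · intro a b
      refine Fin.cases ?_ (fun a => ?_) a <;> refine Fin.cases ?_ (fun b => ?_) b
      · simp
      · simpa [G.adj_comm v, H.adj_comm 0] using (hX' b).2
      · simpa using (hX' a).2
      · simpa using ha a b
    · intro a
      refine Fin.cases ?_ (fun a => ?_) a
      · simpa using hv
      · simpa using (hX' a).1⟩
  left_inv := by
    rintro ⟨f, hf, rfl⟩
    ext i
    refine Fin.cases ?_ (fun i => ?_) i <;> simp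
  right_inv := by
    rintro ⟨g, hg⟩
    ext i
    simp

/-- Classifying embeddings by the image of their root `0`. -/
lemma sum_rooted {V 𝒳 : Type} [Fintype V] {m : ℕ} (G : SimpleGraph V) (X : V → 𝒳)
    (H : SimpleGraph (Fin (m + 1))) (Y : Fin (m + 1) → 𝒳) :
    ∑ v, Nat.card {f // IsEmb G X H Y f ∧ f 0 = v} = Nat.card {f // IsEmb G X H Y f} := by
  rw [← Nat.card_sigma]
  refine Nat.card_congr ?_
  refine Equiv.trans (Equiv.sigmaCongrRight fun v => ?_)
    (Equiv.sigmaFiberEquiv fun f : {f // IsEmb G X H Y f} => f.1 0)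
  exact (Equiv.subtypeSubtypeEquivSubtypeInter (IsEmb G X H Y) (fun f => f 0 = v)).symm

/-- The vertex encoding of `v` determines the number of embeddings of `H` rooted at `v`: the
function `Φ` does not depend on the attributed graph. -/
lemma exists_rootedCount (rs : List ℕ) : ∀ (𝒳 : Type) (H : SimpleGraph (Fin (rs.length + 1)))
    (Y : Fin (rs.length + 1) → 𝒳), Covers rs H →
    ∃ Φ : RNPType rs.length 𝒳 → ℕ, ∀ (V : Type) (inst : Fintype V) (G : SimpleGraph V)
      (X : V → 𝒳) (v : V),
      Φ (rnpHAux rs V inst 𝒳 G X v) = Nat.card {f // IsEmb G X H Y f ∧ f 0 = v} := by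
  induction rs with
  | nil =>
    intro 𝒳 H Y _
    refine ⟨fun x : 𝒳 => if x = Y 0 then 1 else 0, fun V inst G X v => ?_⟩
    have h0 : ∀ i : Fin (([] : List ℕ).length + 1), i = 0 :=
      fun i => Subsingleton.elim (α := Fin 1) i 0
    have key : ∀ f : Fin 1 → V, IsEmb G X H Y f ∧ f 0 = v ↔ X v = Y 0 ∧ f = fun _ => v := by
      intro f
      constructor
      · rintro ⟨⟨-, -, h⟩, rfl⟩
        exact ⟨h 0, funext fun i => by rw [h0 i]⟩
      · rintro ⟨h, rfl⟩
        refine ⟨⟨fun a b _ => (h0 a).trans (h0 b).symm, fun a b => ?_, fun a => ?_⟩, rfl⟩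
        · rw [h0 a, h0 b]
          simp
        · rw [h, h0 a]
    change (if X v = Y 0 then 1 else 0) = Nat.card {f : Fin 1 → V // IsEmb G X H Y f ∧ f 0 = v}
    simp only [key]
    by_cases h : X v = Y 0 <;> simp [h]
  | cons r rs ih =>
    intro 𝒳 H Y hc
    obtain ⟨Φ, hΦ⟩ := ih (𝒳 × Bool) (SimpleGraph.comap Fin.succ H)
      (fun i => (Y i.succ, decide (H.Adj i.succ 0))) hc.tail
    refine ⟨fun p : 𝒳 × Multiset (RNPType rs.length (𝒳 × Bool)) =>
      if p.1 = Y 0 then (p.2.map Φ).sum else 0, fun V inst G X v => ?_⟩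
    have hr : ∀ u, ∃ w : H.Walk 0 u, w.length ≤ r := fun u => by
      obtain ⟨w, hw, -⟩ := hc 0 u (Fin.zero_le _)
      exact ⟨w, hw⟩
    let S := pball G r v
    let _ : Fintype S := Fintype.ofFinite S
    change (if X v = Y 0 then (((Finset.univ : Finset S).val.map fun u =>
      rnpHAux rs S (Fintype.ofFinite S) (𝒳 × Bool) (G.induce S)
        (fun w => ((X w.1, decide (G.Adj w.1 v)) : 𝒳 × Bool)) u).map Φ).sum else 0) = _
    by_cases h : X v = Y 0
    · rw [if_pos h, Multiset.map_map]
      refine Eq.trans ?_ (Nat.card_congr (consEquiv G X H Y r v hr h)).symm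
      rw [← sum_rooted]
      exact Finset.sum_congr rfl fun u _ => hΦ _ _ _ _ u
    · rw [if_neg h]
      symm
      rw [Nat.card_eq_zero]
      refine Or.inl ⟨?_⟩
      rintro ⟨f, ⟨-, -, hX⟩, rfl⟩
      exact h (hX 0)

/-- The vertex sets carrying an induced copy of `H`, each with a chosen isomorphism from `H`. -/
abbrev MarkedCopy {V W 𝒳 : Type} (G : SimpleGraph V) (X : V → 𝒳) (H : SimpleGraph W)
    (Y : W → 𝒳) : Type :=
  (S : {S : Set V // AttrIso (G.induce S) (fun u => X u.1) H Y}) ×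
    {φ : H ≃g G.induce S.1 // ∀ a, X (φ a).1 = Y a}

/-- A marked copy is determined by the underlying map on vertices: its vertex set is the range. -/
lemma MarkedCopy.ext_fun {V W 𝒳 : Type} {G : SimpleGraph V} {X : V → 𝒳} {H : SimpleGraph W}
    {Y : W → 𝒳} (p q : MarkedCopy G X H Y) (h : ∀ a, (p.2.1 a).1 = (q.2.1 a).1) : p = q := by
  have hrange : ∀ p : MarkedCopy G X H Y, p.1.1 = Set.range fun a => (p.2.1 a).1 := by
    intro p
    ext x
    constructor
    · intro hx
      exact ⟨p.2.1.symm ⟨x, hx⟩, by simp⟩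
    · rintro ⟨a, rfl⟩
      exact (p.2.1 a).2
  have hpq : p.1.1 = q.1.1 := by
    rw [hrange p, hrange q]
    simp only [h]
  obtain ⟨⟨S, hS⟩, φ, hφ⟩ := p
  obtain ⟨⟨T, hT⟩, ψ, hψ⟩ := q
  obtain rfl : S = T := hpq
  obtain rfl : φ = ψ := RelIso.ext fun a => Subtype.ext (h a)
  rfl

/-- An embedding is its image, together with an isomorphism from `H` onto the subgraph induced
on that image. -/
noncomputable def embEquivMarkedCopy {V W 𝒳 : Type} (G : SimpleGraph V) (X : V → 𝒳) (H : SimpleGraph W)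
    (Y : W → 𝒳) : {f // IsEmb G X H Y f} ≃ MarkedCopy G X H Y where
  toFun f :=
    let φ : H ≃g G.induce (Set.range f.1) :=
      ⟨Equiv.ofInjective f.1 f.2.1, fun {a b} => by simp [f.2.2.1]⟩
    ⟨⟨Set.range f.1, φ.symm, fun v => by
      obtain ⟨a, rfl⟩ := φ.surjective v
      rw [RelIso.symm_apply_apply]
      exact (f.2.2.2 a).symm⟩, φ, fun a => f.2.2.2 a⟩
  invFun p := ⟨fun a => (p.2.1 a).1, Subtype.val_injective.comp p.2.1.injective,
    fun a b => p.2.1.map_rel_iff, p.2.2⟩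
  left_inv _ := rfl
  right_inv _ := MarkedCopy.ext_fun _ _ fun _ => rfl

/-- Every induced copy of `H` is the image of exactly `|Aut (H, Y)|` embeddings. -/
lemma card_isEmb {V W 𝒳 : Type} [Finite V] (G : SimpleGraph V) (X : V → 𝒳)
    (H : SimpleGraph W) (Y : W → 𝒳) :
    Nat.card {f // IsEmb G X H Y f} =
      inducedCount G X H Y * Nat.card {φ : H ≃g H // ∀ a, Y (φ a) = Y a} := by
  rw [inducedCount, ← Nat.card_prod]
  refine Nat.card_congr ((embEquivMarkedCopy G X H Y).trans
    ((Equiv.sigmaCongrRight fun S => ?_).trans (Equiv.sigmaEquivProd _ _)))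
  let ψ := S.2.choose
  have hψ : ∀ v, Y (ψ v) = X v.1 := S.2.choose_spec
  refine ⟨fun φ => ⟨φ.1.trans ψ, fun a => (hψ _).trans (φ.2 a)⟩,
    fun θ => ⟨θ.1.trans ψ.symm, fun a => ?_⟩, fun φ => ?_, fun θ => ?_⟩
  · rw [← hψ]
    simpa using θ.2 a
  · ext a
    simp
  · ext a
    simp

lemma inducedCount_comap {V W W' 𝒳 : Type} (G : SimpleGraph V) (X : V → 𝒳)
    (H : SimpleGraph W) (Y : W → 𝒳) (e : W' ≃ W) :
    inducedCount G X (H.comap e) (Y ∘ e) = inducedCount G X H Y := by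
  unfold inducedCount
  refine Nat.card_congr (Equiv.subtypeEquivRight fun S => ?_)
  let ι : H.comap e ≃g H := SimpleGraph.Iso.comap e H
  constructor
  · rintro ⟨φ, h⟩
    exact ⟨φ.trans ι, h⟩
  · rintro ⟨φ, h⟩
    refine ⟨φ.trans ι.symm, fun v => ?_⟩
    rw [← h v]
    exact congrArg Y (ι.apply_symm_apply (φ v))

/-- Relabelling `H` along a vertex covering sequence makes the identity a covering sequence. -/
lemma IsVertexCoveringSeq.covers {τ : ℕ} {H : SimpleGraph (Fin (τ + 1))} {r : Fin τ → ℕ}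
    {σ : Equiv.Perm (Fin (τ + 1))} (h : IsVertexCoveringSeq H r σ) :
    Covers (List.ofFn r) (H.comap
      ((finCongr (congrArg (· + 1) (List.length_ofFn (f := r)))).trans σ)) := by
  intro i u hu
  set c := finCongr (congrArg (· + 1) (List.length_ofFn (f := r))) with hcdef
  let j : Fin τ := i.cast List.length_ofFn
  have hcj : c i.castSucc = j.castSucc := rfl
  obtain ⟨hconn, hd⟩ := h j
  have hu' : σ (c u) ∈ coverSet σ j.castSucc := ⟨c u, hu, rfl⟩
  obtain ⟨w, hw⟩ := hconn.exists_walk_length_eq_dist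
    ⟨σ j.castSucc, ⟨j.castSucc, le_refl j.castSucc, rfl⟩⟩ ⟨σ (c u), hu'⟩
  obtain ⟨w', h1, h2⟩ := exists_walk_comap (c.trans σ) (c.trans σ).injective H
    (w.map (SimpleGraph.Embedding.induce _).toHom) i.castSucc u rfl rfl
    (fun z _ => (c.trans σ).surjective z)
  refine ⟨w', ?_, fun x hx => ?_⟩
  · have := hd ⟨σ (c u), hu'⟩
    rw [h1, SimpleGraph.Walk.length_map, hw]
    exact this.trans_eq (List.get_ofFn r i).symm
  · have hx' : σ (c x) ∈ w'.support.map (c.trans σ) := List.mem_map_of_mem hx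
    rw [h2, SimpleGraph.Walk.support_map, List.mem_map] at hx'
    obtain ⟨⟨y, k, hk, rfl⟩, -, hy⟩ := hx'
    have : k = c x := σ.injective hy
    subst this
    exact hk

/-- If `H` is a connected attributed graph on `τ+1` vertices (attributes
in a countable set `𝒳`) whose underlying graph admits the covering sequence
`(r 1, ..., r τ)` of positive integers, then for all attributed graphs `G₁, G₂` on `n`
vertices, a difference in induced subgraph counts of `H` forces a difference of the RNP
encodings with recursion parameters `(r 1, ..., r τ)`. -/
theorem rnp_determines_inducedCount {𝒳 : Type} [Countable 𝒳] {τ n : ℕ} (hτ : 1 ≤ τ)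
    (r : Fin τ → ℕ) (hr : ∀ i, 0 < r i)
    (H : SimpleGraph (Fin (τ + 1))) (Y : Fin (τ + 1) → 𝒳)
    (hH : H.Connected) (hcov : AdmitsCoveringSeq H r)
    (G₁ G₂ : SimpleGraph (Fin n)) (X₁ X₂ : Fin n → 𝒳)
    (hC : inducedCount G₁ X₁ H Y ≠ inducedCount G₂ X₂ H Y) :
    rnpEnc G₁ X₁ (List.ofFn r) ≠ rnpEnc G₂ X₂ (List.ofFn r) := by
  obtain ⟨σ, hσ⟩ := hcov
  intro hEnc
  apply hC
  set e := (finCongr (congrArg (· + 1) (List.length_ofFn (f := r)))).trans σ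
  obtain ⟨Φ, hΦ⟩ := exists_rootedCount _ 𝒳 (H.comap e) (Y ∘ e) hσ.covers
  have key : ∀ (G : SimpleGraph (Fin n)) (X : Fin n → 𝒳),
      ((rnpEnc G X (List.ofFn r)).map Φ).sum = inducedCount G X H Y *
        Nat.card {φ : H.comap e ≃g H.comap e // ∀ a, (Y ∘ e) (φ a) = (Y ∘ e) a} := by
    intro G X
    rw [← inducedCount_comap G X H Y e, ← card_isEmb, ← sum_rooted, rnpEnc, Multiset.map_map]
    exact Finset.sum_congr rfl fun v _ => hΦ _ _ G X v
  have : Finite (H.comap e ≃g H.comap e) :=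
    Finite.of_injective (fun φ : H.comap e ≃g H.comap e => (φ : _ → _)) DFunLike.coe_injective
  have hne : Nonempty {φ : H.comap e ≃g H.comap e // ∀ a, (Y ∘ e) (φ a) = (Y ∘ e) a} :=
    ⟨⟨RelIso.refl _, fun _ => rfl⟩⟩
  have hpos : 0 < Nat.card {φ : H.comap e ≃g H.comap e // ∀ a, (Y ∘ e) (φ a) = (Y ∘ e) a} :=
    Nat.card_pos
  refine Nat.eq_of_mul_eq_mul_right hpos ?_
  rw [← key G₁ X₁, ← key G₂ X₂, hEnc]
end

section
/- Let 𝒳 be a countable attribute set and let r ≥ 2. For all attributed graphs G_1, G_2 on n vertices with attributes in 𝒳: if Enc_{(r-1, r-2, ..., 1)}(G_1) = Enc_{(r-1, r-2, ..., 1)}(G_2), then C(G_1; H) = C(G_2; H) for every attributed graph H on r vertices (H need not be connected). That is, the RNP encoding with recursion parameters (r-1, r-2, ..., 1) determines the induced subgraph count of every (possibly disconnected) attributed graph on r vertices. -/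
/-!
The proof counts tuples of vertices by atomic type (equalities, adjacencies and attributes of the
entries) instead of induced subgraphs. By induction on `k`, the encoding with parameters
`(k, ..., 1)` determines, for every atomic type on at most `k + 1` indices, the number of tuples
realising it (`sameCounts_of_rnpEnc_eq`).

Call two indices linked if their entries are equal or adjacent, and a type connected if the linked
pairs form a connected graph.

* For a connected type, fix a root index and the vertex `v` it is sent to. All entries lie within
  distance `k` of `v`, and deleting the entries equal to `v` leaves a tuple on fewer indices in the
  punctured ball around `v`; the augmented attributes remember adjacency to `v`, so nothing is
  lost (`card_rooted`). The rest need not be connected, but the encoding of `v` consists of its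
  attribute and the encoding of the augmented punctured ball, to which the induction hypothesis
  applies. Equal graph encodings match up the roots of the two graphs.
* For a type that is not connected, cut the indices along a component. The product of the counts of
  the two restrictions counts all tuples with these restrictions; such a tuple has the original
  type or a type with strictly more linked pairs (`gaps_lt_of_ne`). Induction on the number of
  unlinked pairs, which also decreases under restriction, concludes (`sameCounts_of_rooted`).

Finally, the tuples realising the type of the identity tuple of `(H, Y)` are the attributed
embeddings of `(H, Y)` as an induced subgraph, of which there are
`inducedCount G X H Y * |Aut (H, Y)|`.
-/

open Classical

/-! ### Atomic types of tuples -/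

/-- Atomic types of `W`-indexed tuples of vertices: the equality pattern, the adjacency
pattern, and the attributes of the entries. -/
abbrev TupleType (W 𝒳 : Type) : Type := (W → W → Prop) × (W → W → Prop) × (W → 𝒳)

/-- The atomic type realised by the (not necessarily injective) tuple `f` in `(G, X)`. -/
def tp {V W 𝒳 : Type} (G : SimpleGraph V) (X : V → 𝒳) (f : W → V) : TupleType W 𝒳 :=
  (fun a b => f a = f b, fun a b => G.Adj (f a) (f b), fun a => X (f a))

lemma tp_eq_iff {V V' W 𝒳 : Type} {G : SimpleGraph V} {X : V → 𝒳} {f : W → V}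
    {G' : SimpleGraph V'} {X' : V' → 𝒳} {f' : W → V'} :
    tp G X f = tp G' X' f' ↔ (∀ a b, f a = f b ↔ f' a = f' b) ∧
      (∀ a b, G.Adj (f a) (f b) ↔ G'.Adj (f' a) (f' b)) ∧ ∀ a, X (f a) = X' (f' a) := by
  simp [tp, Prod.ext_iff, funext_iff]

/-- The number of tuples in `(G, X)` realising the atomic type `t`. -/
noncomputable def cnt {V W 𝒳 : Type} (G : SimpleGraph V) (X : V → 𝒳) (t : TupleType W 𝒳) : ℕ :=
  Nat.card {f : W → V // tp G X f = t}

/-- Restriction of an atomic type to the index set `{w // p w}`. -/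
def res {W 𝒳 : Type} (p : W → Prop) (t : TupleType W 𝒳) : TupleType {w // p w} 𝒳 :=
  (fun a b => t.1 a b, fun a b => t.2.1 a b, fun a => t.2.2 a)

/-- Two indices are linked when their entries are equal or adjacent. -/
def rel {W 𝒳 : Type} (t : TupleType W 𝒳) (a b : W) : Prop := t.1 a b ∨ t.2.1 a b

/-- The graph on indices formed by the linked pairs. -/
def link {W 𝒳 : Type} (t : TupleType W 𝒳) : SimpleGraph W := SimpleGraph.fromRel (rel t)

/-- The number of ordered pairs of indices that are not linked. -/
noncomputable def gaps {W 𝒳 : Type} (t : TupleType W 𝒳) : ℕ :=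
  Nat.card {p : W × W // ¬ rel t p.1 p.2}

/-- `(G₁, X₁)` and `(G₂, X₂)` have the same number of realisations of every atomic type
on at most `m` indices. -/
def SameCounts {V₁ V₂ 𝒳 : Type} (m : ℕ) (G₁ : SimpleGraph V₁) (X₁ : V₁ → 𝒳)
    (G₂ : SimpleGraph V₂) (X₂ : V₂ → 𝒳) : Prop :=
  ∀ (W : Type) [Finite W], Nat.card W ≤ m → ∀ t : TupleType W 𝒳, cnt G₁ X₁ t = cnt G₂ X₂ t

/-- Two maps whose fibres over the points of `Q` have equal sizes have equally large
preimages of `Q`. -/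
lemma card_preimage_congr {F₁ F₂ T : Type} [Finite F₁] [Finite F₂] (τ₁ : F₁ → T) (τ₂ : F₂ → T)
    (Q : T → Prop)
    (h : ∀ t, Q t → Nat.card {f // τ₁ f = t} = Nat.card {f // τ₂ f = t}) :
    Nat.card {f // Q (τ₁ f)} = Nat.card {f // Q (τ₂ f)} := by
  have e : ∀ t : Subtype Q, Nonempty ({f // τ₁ f = t.1} ≃ {f // τ₂ f = t.1}) := fun t =>
    Finite.card_eq.1 (h t.1 t.2)
  exact Nat.card_congr <|
    ((Equiv.sigmaSubtypeFiberEquivSubtype τ₁ (q := Q) (fun _ => Iff.rfl)).symm.trans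
      (Equiv.sigmaCongrRight fun t => (e t).some)).trans
      (Equiv.sigmaSubtypeFiberEquivSubtype τ₂ (q := Q) (fun _ => Iff.rfl))

/-! ### Types that are not connected -/

/-- Tuples with prescribed restrictions to two complementary sets of indices are pairs of
tuples. -/
lemma card_split {V W 𝒳 : Type} (G : SimpleGraph V) (X : V → 𝒳) (p : W → Prop)
    (t : TupleType W 𝒳) :
    Nat.card {f : W → V // res p (tp G X f) = res p t ∧
      res (fun w => ¬ p w) (tp G X f) = res (fun w => ¬ p w) t} =
    cnt G X (res p t) * cnt G X (res (fun w => ¬ p w) t) := by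
  rw [cnt, cnt, ← Nat.card_prod]
  refine Nat.card_congr (((Equiv.piEquivPiSubtypeProd p (fun _ => V)).subtypeEquiv ?_).trans
    (Equiv.subtypeProdEquivProd))
  intro f
  rfl

/-- Restriction loses an unlinked pair that does not lie inside the new index set. -/
lemma gaps_res_lt {W 𝒳 : Type} [Finite W] (p : W → Prop) (t : TupleType W 𝒳) {a b : W}
    (hab : ¬ rel t a b) (h : ¬ (p a ∧ p b)) : gaps (res p t) < gaps t := by
  have := Fintype.ofFinite {q : W × W // ¬ rel t q.1 q.2}
  have := Fintype.ofFinite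
    {q : {w // p w} × {w // p w} // ¬ rel (res p t) q.1 q.2}
  unfold gaps
  rw [Nat.card_eq_fintype_card, Nat.card_eq_fintype_card]
  refine Fintype.card_lt_of_injective_of_notMem
    (fun q => ⟨(q.1.1.1, q.1.2.1), q.2⟩) ?_ (b := ⟨(a, b), hab⟩) ?_
  · rintro ⟨⟨⟨x, _⟩, ⟨y, _⟩⟩, _⟩ ⟨⟨⟨x', _⟩, ⟨y', _⟩⟩, _⟩ h
    have h' := congrArg Subtype.val h
    simp only [Prod.mk.injEq] at h'
    simpa using h'
  · rintro ⟨⟨⟨⟨x, hx⟩, ⟨y, hy⟩⟩, _⟩, h'⟩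
    have h' := congrArg Subtype.val h'
    simp only [Prod.mk.injEq] at h'
    obtain ⟨rfl, rfl⟩ := h'
    exact h ⟨hx, hy⟩

lemma rel_symm_tp {V W 𝒳 : Type} {G : SimpleGraph V} {X : V → 𝒳} {f : W → V} {a b : W}
    (h : rel (tp G X f) a b) : rel (tp G X f) b a :=
  h.imp (fun h => Eq.symm h) (fun h => SimpleGraph.Adj.symm h)

/-- A realised type `t'` that agrees with the realised type `t` on both sides of a cut without
links in `t` is either `t` itself or has fewer unlinked pairs. -/
lemma gaps_lt_of_ne {V V' W 𝒳 : Type} [Finite W] {G : SimpleGraph V} {X : V → 𝒳} {f : W → V}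
    {G' : SimpleGraph V'} {X' : V' → 𝒳} {f' : W → V'} (p : W → Prop)
    (hcut : ∀ a b, p a → ¬ p b → ¬ rel (tp G X f) a b)
    (h1 : res p (tp G' X' f') = res p (tp G X f))
    (h2 : res (fun w => ¬ p w) (tp G' X' f') = res (fun w => ¬ p w) (tp G X f))
    (hne : tp G' X' f' ≠ tp G X f) : gaps (tp G' X' f') < gaps (tp G X f) := by
  have hcut' : ∀ a b, (p a ↔ ¬ p b) → ¬ rel (tp G X f) a b := by
    intro a b hab h
    by_cases ha : p a
    · exact hcut a b ha (hab.1 ha) h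
    · exact hcut b a (by tauto) ha (rel_symm_tp h)
  simp only [res, tp, Prod.mk.injEq, funext_iff, Subtype.forall] at h1 h2
  have hrel : ∀ a b, ¬ rel (tp G' X' f') a b → ¬ rel (tp G X f) a b := by
    intro a b hn
    by_cases hab : p a ↔ ¬ p b
    · exact hcut' a b hab
    · by_cases ha : p a
      · have hb : p b := by tauto
        have e1 := h1.1 a ha b hb
        have e2 := h1.2.1 a ha b hb
        simp only [rel, tp] at hn ⊢
        rwa [← e1, ← e2]
      · have hb : ¬ p b := by tauto
        have e1 := h2.1 a ha b hb
        have e2 := h2.2.1 a ha b hb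
        simp only [rel, tp] at hn ⊢
        rwa [← e1, ← e2]
  obtain ⟨a, b, hab, hR⟩ : ∃ a b, (p a ↔ ¬ p b) ∧ rel (tp G' X' f') a b := by
    by_contra! hno
    apply hne
    rw [tp_eq_iff]
    refine ⟨fun a b => ?_, fun a b => ?_, fun a => ?_⟩
    · by_cases hab : p a ↔ ¬ p b
      · exact iff_of_false (fun h => hno a b hab (Or.inl h)) (fun h => hcut' a b hab (Or.inl h))
      · by_cases ha : p a
        · exact iff_of_eq (h1.1 a ha b (by tauto))
        · exact iff_of_eq (h2.1 a ha b (by tauto))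
    · by_cases hab : p a ↔ ¬ p b
      · exact iff_of_false (fun h => hno a b hab (Or.inr h)) (fun h => hcut' a b hab (Or.inr h))
      · by_cases ha : p a
        · exact iff_of_eq (h1.2.1 a ha b (by tauto))
        · exact iff_of_eq (h2.2.1 a ha b (by tauto))
    · by_cases ha : p a
      · exact h1.2.2 a ha
      · exact h2.2.2 a ha
  have := Fintype.ofFinite {q : W × W // ¬ rel (tp G X f) q.1 q.2}
  have := Fintype.ofFinite {q : W × W // ¬ rel (tp G' X' f') q.1 q.2}
  unfold gaps
  rw [Nat.card_eq_fintype_card, Nat.card_eq_fintype_card]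
  refine Fintype.card_lt_of_injective_of_notMem
    (fun q => ⟨q.1, hrel _ _ q.2⟩) ?_ (b := ⟨(a, b), hcut' a b hab⟩) ?_
  · rintro ⟨x, _⟩ ⟨y, _⟩ h
    simpa using h
  · rintro ⟨⟨x, hx⟩, h'⟩
    simp only [Subtype.mk.injEq] at h'
    subst h'
    exact hx hR

lemma cnt_eq_zero_iff {V W 𝒳 : Type} [Finite V] [Finite W] {G : SimpleGraph V} {X : V → 𝒳}
    {t : TupleType W 𝒳} : cnt G X t = 0 ↔ ∀ f, tp G X f ≠ t := by
  unfold cnt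
  rw [Finite.card_eq_zero_iff, isEmpty_subtype]

/-- The tuples whose type satisfies `P` split into those of type `t` and the others. -/
lemma cnt_add {V W 𝒳 : Type} [Finite V] [Finite W] (G : SimpleGraph V) (X : V → 𝒳)
    (t : TupleType W 𝒳) (P : TupleType W 𝒳 → Prop) (hP : P t) :
    cnt G X t + Nat.card {f : W → V // P (tp G X f) ∧ tp G X f ≠ t} =
      Nat.card {f : W → V // P (tp G X f)} := by
  have := Fintype.ofFinite (W → V)
  unfold cnt
  simp only [Nat.card_eq_fintype_card, Fintype.card_subtype]
  rw [← Finset.card_union_of_disjoint]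
  · congr 1
    ext f
    simp only [Finset.mem_union, Finset.mem_filter, Finset.mem_univ, true_and]
    by_cases h : tp G X f = t
    · simp [h, hP]
    · simp [h]
  · rw [Finset.disjoint_filter]
    tauto

/-- If a bijection of the vertices preserves the number of realisations of connected types with the
root entry prescribed, then the realisations of all types, connected or not, are equally many. -/
lemma sameCounts_of_rooted {V₁ V₂ 𝒳 : Type} [Finite V₁] [Finite V₂] {m : ℕ}
    {G₁ : SimpleGraph V₁} {X₁ : V₁ → 𝒳} {G₂ : SimpleGraph V₂} {X₂ : V₂ → 𝒳} (σ : V₁ ≃ V₂)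
    (hroot : ∀ (W : Type) [Finite W], Nat.card W ≤ m → ∀ (t : TupleType W 𝒳) (w₀ : W),
      (∀ w, (link t).Reachable w₀ w) → ∀ v,
        Nat.card {f : W → V₁ // tp G₁ X₁ f = t ∧ f w₀ = v} =
        Nat.card {f : W → V₂ // tp G₂ X₂ f = t ∧ f w₀ = σ v}) :
    SameCounts m G₁ X₁ G₂ X₂ := by
  suffices H : ∀ (N : ℕ) (W : Type) [Finite W], Nat.card W ≤ m → ∀ t : TupleType W 𝒳,
      gaps t = N → cnt G₁ X₁ t = cnt G₂ X₂ t from fun W _ hW t => H _ W hW t rfl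
  intro N
  induction N using Nat.strong_induction_on with
  | _ N ih =>
  intro W _ hW t hN
  rcases isEmpty_or_nonempty W with hE | ⟨⟨w₀⟩⟩
  · exact Nat.card_congr (Equiv.subtypeEquiv (Equiv.ofUnique _ _)
      fun f => iff_of_true (by ext x <;> exact hE.elim x) (by ext x <;> exact hE.elim x))
  by_cases hc : ∀ w, (link t).Reachable w₀ w
  · have e : ∀ v, Nonempty ({f : W → V₁ // tp G₁ X₁ f = t ∧ f w₀ = v} ≃
        {f : W → V₂ // tp G₂ X₂ f = t ∧ f w₀ = σ v}) := fun v =>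
      Finite.card_eq.1 (hroot W hW t w₀ hc v)
    have e₁ : {f : W → V₁ // tp G₁ X₁ f = t} ≃
        Σ v, {f : W → V₁ // tp G₁ X₁ f = t ∧ f w₀ = v} :=
      (Equiv.sigmaFiberEquiv fun f : {f : W → V₁ // tp G₁ X₁ f = t} => f.1 w₀).symm.trans
        (Equiv.sigmaCongrRight fun v =>
          Equiv.subtypeSubtypeEquivSubtypeInter _ (fun f : W → V₁ => f w₀ = v))
    have e₂ : {f : W → V₂ // tp G₂ X₂ f = t} ≃
        Σ v, {f : W → V₂ // tp G₂ X₂ f = t ∧ f w₀ = v} :=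
      (Equiv.sigmaFiberEquiv fun f : {f : W → V₂ // tp G₂ X₂ f = t} => f.1 w₀).symm.trans
        (Equiv.sigmaCongrRight fun v =>
          Equiv.subtypeSubtypeEquivSubtypeInter _ (fun f : W → V₂ => f w₀ = v))
    exact Nat.card_congr ((e₁.trans (Equiv.sigmaCongr σ fun v => (e v).some)).trans e₂.symm)
  · -- cut `W` along the component of `w₀`
    -- a type realised in neither graph is trivial; a realised one has a symmetric `rel`
    by_cases hz : (∀ f, tp G₁ X₁ f ≠ t) ∧ ∀ f, tp G₂ X₂ f ≠ t
    · rw [cnt_eq_zero_iff.2 hz.1, cnt_eq_zero_iff.2 hz.2]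
    obtain ⟨V₀, G₀, X₀, f₀, rfl⟩ : ∃ (V₀ : Type) (G₀ : SimpleGraph V₀) (X₀ : V₀ → 𝒳)
        (f₀ : W → V₀), tp G₀ X₀ f₀ = t := by
      rw [not_and_or] at hz
      push Not at hz
      rcases hz with ⟨f, hf⟩ | ⟨f, hf⟩
      · exact ⟨_, _, _, f, hf⟩
      · exact ⟨_, _, _, f, hf⟩
    set t := tp G₀ X₀ f₀ with ht
    set p : W → Prop := fun w => (link t).Reachable w₀ w with hp
    obtain ⟨b, hb⟩ : ∃ b, ¬ p b := by simpa using hc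
    have hp0 : p w₀ := SimpleGraph.Reachable.refl _
    have hcut : ∀ a b, p a → ¬ p b → ¬ rel t a b := by
      intro a b ha hb h
      refine hb (SimpleGraph.Reachable.trans ha (SimpleGraph.Adj.reachable ?_))
      rw [link, SimpleGraph.fromRel_adj]
      exact ⟨fun e => hb (e ▸ ha), Or.inl h⟩
    have hA := ih _ (hN ▸ gaps_res_lt p t (hcut w₀ b hp0 hb) (fun h => hb h.2)) {w // p w}
      ((Finite.card_subtype_le _).trans hW) (res p t) rfl
    have hB := ih _ (hN ▸ gaps_res_lt (fun w => ¬ p w) t (hcut w₀ b hp0 hb) (fun h => h.1 hp0))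
      {w // ¬ p w} ((Finite.card_subtype_le _).trans hW) (res _ t) rfl
    let P : TupleType W 𝒳 → Prop := fun t' =>
      res p t' = res p t ∧ res (fun w => ¬ p w) t' = res (fun w => ¬ p w) t
    have hP : Nat.card {f : W → V₁ // P (tp G₁ X₁ f)} =
        Nat.card {f : W → V₂ // P (tp G₂ X₂ f)} := by
      rw [card_split G₁ X₁ p t, card_split G₂ X₂ p t, hA, hB]
    have hQ : Nat.card {f : W → V₁ // P (tp G₁ X₁ f) ∧ tp G₁ X₁ f ≠ t} =
        Nat.card {f : W → V₂ // P (tp G₂ X₂ f) ∧ tp G₂ X₂ f ≠ t} := by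
      refine card_preimage_congr (tp G₁ X₁) (tp G₂ X₂) (fun t' => P t' ∧ t' ≠ t) ?_
      rintro t' ⟨⟨h1, h2⟩, hne⟩
      by_cases hz' : (∀ f, tp G₁ X₁ f ≠ t') ∧ ∀ f, tp G₂ X₂ f ≠ t'
      · exact (cnt_eq_zero_iff.2 hz'.1).trans (cnt_eq_zero_iff.2 hz'.2).symm
      refine ih _ ?_ W hW t' rfl
      rw [← hN]
      rw [not_and_or] at hz'
      push Not at hz'
      rcases hz' with ⟨f, rfl⟩ | ⟨f, rfl⟩
      · exact gaps_lt_of_ne p hcut h1 h2 hne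
      · exact gaps_lt_of_ne p hcut h1 h2 hne
    have c₁ := cnt_add G₁ X₁ t P ⟨rfl, rfl⟩
    have c₂ := cnt_add G₂ X₂ t P ⟨rfl, rfl⟩
    omega

/-! ### Connected types: deleting the root -/

/-- The punctured ball of radius `k` around `v`. -/
def punc {V : Type} (G : SimpleGraph V) (v : V) (k : ℕ) : Set V :=
  {u | (∃ w : G.Walk v u, w.length ≤ k) ∧ u ≠ v}

/-- The attributes on the punctured ball, augmented by adjacency to `v`. -/
noncomputable def aug {V 𝒳 : Type} (G : SimpleGraph V) (X : V → 𝒳) (v : V) (k : ℕ) :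
    punc G v k → 𝒳 × Bool :=
  fun w => (X w.1, decide (G.Adj w.1 v))

lemma aug_eq_iff {V V' 𝒳 : Type} {G : SimpleGraph V} {X : V → 𝒳} {v : V} {k k' : ℕ}
    {u : punc G v k} {G' : SimpleGraph V'} {X' : V' → 𝒳} {v' : V'} {u' : punc G' v' k'} :
    aug G X v k u = aug G' X' v' k' u' ↔
      X u = X' u' ∧ (G.Adj u v ↔ G'.Adj u' v') := by
  simp [aug]

/-- A walk of linked indices projects to a walk in `G`, which skips the steps between equal
entries. -/
lemma exists_walk_of_link {V W 𝒳 : Type} {G : SimpleGraph V} {X : V → 𝒳} {f : W → V} {a b : W}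
    (p : (link (tp G X f)).Walk a b) : ∃ q : G.Walk (f a) (f b), q.length ≤ p.length := by
  induction p with
  | nil => exact ⟨.nil, le_rfl⟩
  | @cons a c b h p ih =>
    obtain ⟨q, hq⟩ := ih
    have hr : rel (tp G X f) a c := by
      rw [link, SimpleGraph.fromRel_adj] at h
      exact h.2.elim id rel_symm_tp
    rcases hr with hr | hr
    · have hr : f a = f c := hr
      exact ⟨q.copy hr.symm rfl, by simp; omega⟩
    · exact ⟨.cons (v := f c) hr q, Nat.succ_le_succ hq⟩

lemma exists_short_walk {V W 𝒳 : Type} [Finite W] {G : SimpleGraph V} {X : V → 𝒳} {f : W → V}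
    {k : ℕ} (hW : Nat.card W ≤ k + 1) {a b : W} (h : (link (tp G X f)).Reachable a b) :
    ∃ q : G.Walk (f a) (f b), q.length ≤ k := by
  have := Fintype.ofFinite W
  obtain ⟨p, hp⟩ := h.exists_isPath
  obtain ⟨q, hq⟩ := exists_walk_of_link p
  have := hp.length_lt
  rw [Nat.card_eq_fintype_card] at hW
  exact ⟨q, by omega⟩

/-- Delete from a connected tuple all entries equal to its root, and regard the rest as a tuple
in the punctured ball. -/
def delRoot {V W 𝒳 : Type} [Finite W] {G : SimpleGraph V} {X : V → 𝒳} {f : W → V}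
    {k : ℕ} (hW : Nat.card W ≤ k + 1) {w₀ : W}
    (h : ∀ w, (link (tp G X f)).Reachable w₀ w) (p : W → Prop) (hp : ∀ w, p w → f w ≠ f w₀) :
    {w // p w} → punc G (f w₀) k :=
  fun w => ⟨f w.1, exists_short_walk hW (h w.1), hp _ w.2⟩

/-- Realisations of a connected type with the root entry `v` prescribed correspond to
realisations, in the augmented punctured ball around `v`, of the type with the root deleted. -/
lemma card_rooted {V V₀ W 𝒳 : Type} [Finite W] {G₀ : SimpleGraph V₀} {X₀ : V₀ → 𝒳}
    {f₀ : W → V₀} {k : ℕ} (hW : Nat.card W ≤ k + 1) {w₀ : W}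
    (hc : ∀ w, (link (tp G₀ X₀ f₀)).Reachable w₀ w)
    (G : SimpleGraph V) (X : V → 𝒳) (v : V) (hX : X v = X₀ (f₀ w₀)) :
    Nat.card {f : W → V // tp G X f = tp G₀ X₀ f₀ ∧ f w₀ = v} =
      cnt (G.induce (punc G v k)) (aug G X v k)
        (tp (G₀.induce (punc G₀ (f₀ w₀) k)) (aug G₀ X₀ (f₀ w₀) k)
          (delRoot hW hc (fun w => f₀ w ≠ f₀ w₀) (fun _ h => h))) := by
  refine Nat.card_congr
    { toFun := fun f => ⟨fun w => ⟨f.1 w.1, ?_, ?_⟩, ?_⟩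
      invFun := fun g => ⟨fun w => if h : f₀ w ≠ f₀ w₀ then (g.1 ⟨w, h⟩).1 else v, ?_, ?_⟩
      left_inv := ?_
      right_inv := ?_ }
  · obtain ⟨f, hf, rfl⟩ := f
    rw [← hf] at hc
    exact exists_short_walk hW (hc w.1)
  · obtain ⟨f, hf, rfl⟩ := f
    exact fun h => w.2 (((tp_eq_iff.1 hf).1 _ _).1 h)
  · obtain ⟨f, hf, rfl⟩ := f
    obtain ⟨h1, h2, h3⟩ := tp_eq_iff.1 hf
    rw [tp_eq_iff]
    refine ⟨fun a b => ?_, fun a b => ?_, fun a => ?_⟩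
    · simpa [delRoot, Subtype.ext_iff] using h1 a b
    · simpa [delRoot] using h2 a b
    · exact aug_eq_iff.2 ⟨h3 _, h2 _ _⟩
  · obtain ⟨g, hg⟩ := g
    obtain ⟨h1, h2, h3⟩ := tp_eq_iff.1 hg
    simp only [delRoot, Subtype.forall, Subtype.ext_iff, SimpleGraph.comap_adj,
      Function.Embedding.subtype_apply, aug_eq_iff] at h1 h2 h3
    rw [tp_eq_iff]
    have hne : ∀ a h, (g ⟨a, h⟩).1 ≠ v := fun a h => (g ⟨a, h⟩).2.2
    refine ⟨fun a b => ?_, fun a b => ?_, fun a => ?_⟩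
    · by_cases ha : f₀ a = f₀ w₀ <;> by_cases hb : f₀ b = f₀ w₀
      · simp [ha, hb]
      · simpa [ha, hb, Ne.symm hb] using (hne b hb).symm
      · simpa [ha, hb] using hne a ha
      · simpa [ha, hb] using h1 a ha b hb
    · by_cases ha : f₀ a = f₀ w₀ <;> by_cases hb : f₀ b = f₀ w₀
      · simp [ha, hb]
      · simpa [ha, hb, SimpleGraph.adj_comm] using (h3 b hb).2
      · simpa [ha, hb] using (h3 a ha).2
      · simpa [ha, hb] using h2 a ha b hb
    · by_cases ha : f₀ a = f₀ w₀
      · simpa [ha] using hX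
      · simpa [ha] using (h3 a ha).1
  · simp
  · rintro ⟨f, hf, rfl⟩
    ext w
    by_cases h : f₀ w = f₀ w₀
    · simpa [h] using (((tp_eq_iff.1 hf).1 _ _).2 h).symm
    · simp [h]
  · rintro ⟨g, hg⟩
    ext w
    simp [w.2]

/-! ### Recursion on the encoding -/

/-- The sequence `(k, k - 1, ..., 1)`. -/
def down : ℕ → List ℕ
  | 0 => []
  | k + 1 => (k + 1) :: down k

lemma ofFn_eq_down (k : ℕ) : List.ofFn (fun i : Fin k => k - (i : ℕ)) = down k := by
  induction k with
  | zero => rfl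
  | succ k ih =>
    rw [List.ofFn_succ, down, ← ih]
    simp

/-- Equal multisets of values come from a bijection of the index sets that preserves values. -/
lemma exists_equiv_of_map_eq {V₁ V₂ T : Type} [Fintype V₁] [Fintype V₂] {h₁ : V₁ → T}
    {h₂ : V₂ → T}
    (h : (Finset.univ : Finset V₁).val.map h₁ = (Finset.univ : Finset V₂).val.map h₂) :
    ∃ σ : V₁ ≃ V₂, ∀ v, h₂ (σ v) = h₁ v := by
  have hfib : ∀ x, Nonempty ({v // h₁ v = x} ≃ {v // h₂ v = x}) := by
    intro x
    have := congrArg (Multiset.count x) h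
    rw [Multiset.count_map, Multiset.count_map] at this
    rw [← Fintype.card_eq, Fintype.card_subtype, Fintype.card_subtype]
    simpa only [Finset.card_def, Finset.filter_val, eq_comm] using this
  let e := ((Equiv.sigmaFiberEquiv h₁).symm.trans
    (Equiv.sigmaCongrRight fun x => (hfib x).some)).trans (Equiv.sigmaFiberEquiv h₂)
  exact ⟨e, fun v => ((hfib (h₁ v)).some ⟨v, rfl⟩).2⟩

/-- The encoding of `v` with parameters `r :: rs` is the attribute of `v` together with the
encoding of the augmented punctured ball. -/
lemma rnpH_cons {V 𝒳 : Type} [Fintype V] (r : ℕ) (rs : List ℕ) (G : SimpleGraph V) (X : V → 𝒳)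
    (v : V) :
    rnpH (r :: rs) G X v = (X v, @rnpEnc _ _ (Fintype.ofFinite (punc G v r))
      (G.induce (punc G v r)) (aug G X v r) rs) := rfl

/-- Comparison of counts in punctured balls gives comparison of rooted counts. Only an inequality
is stated: when the left side is nonzero, a tuple in `G₁` realises `t`, and the type with its root
deleted can be read off from that tuple. -/
lemma rooted_le {V₁ V₂ W 𝒳 : Type} [Finite V₁] [Finite V₂] [Finite W] {k : ℕ}
    {G₁ : SimpleGraph V₁} {X₁ : V₁ → 𝒳} {G₂ : SimpleGraph V₂} {X₂ : V₂ → 𝒳} {v₁ : V₁} {v₂ : V₂}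
    (hX : X₁ v₁ = X₂ v₂)
    (hS : SameCounts k (G₁.induce (punc G₁ v₁ k)) (aug G₁ X₁ v₁ k)
      (G₂.induce (punc G₂ v₂ k)) (aug G₂ X₂ v₂ k))
    (hW : Nat.card W ≤ k + 1) {t : TupleType W 𝒳} {w₀ : W}
    (hc : ∀ w, (link t).Reachable w₀ w) :
    Nat.card {f : W → V₁ // tp G₁ X₁ f = t ∧ f w₀ = v₁} ≤
      Nat.card {f : W → V₂ // tp G₂ X₂ f = t ∧ f w₀ = v₂} := by
  rcases isEmpty_or_nonempty {f : W → V₁ // tp G₁ X₁ f = t ∧ f w₀ = v₁} with hE | ⟨⟨f₀, rfl, rfl⟩⟩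
  · simp
  rw [card_rooted hW hc G₁ X₁ _ rfl, card_rooted hW hc G₂ X₂ _ hX.symm]
  refine (hS _ ?_ _).le
  have := Finite.card_subtype_lt (p := fun w => f₀ w ≠ f₀ w₀) (x := w₀) (by simp)
  omega

lemma SameCounts.symm {V₁ V₂ 𝒳 : Type} {m : ℕ} {G₁ : SimpleGraph V₁} {X₁ : V₁ → 𝒳}
    {G₂ : SimpleGraph V₂} {X₂ : V₂ → 𝒳} (h : SameCounts m G₁ X₁ G₂ X₂) :
    SameCounts m G₂ X₂ G₁ X₁ := fun W _ hW t => (h W hW t).symm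

lemma sameCounts_zero {V₁ V₂ 𝒳 : Type} (G₁ : SimpleGraph V₁) (X₁ : V₁ → 𝒳)
    (G₂ : SimpleGraph V₂) (X₂ : V₂ → 𝒳) : SameCounts 0 G₁ X₁ G₂ X₂ := by
  intro W _ hW t
  have hE : IsEmpty W := by
    rw [← Finite.card_eq_zero_iff]
    omega
  exact Nat.card_congr (Equiv.subtypeEquiv (Equiv.ofUnique _ _)
    fun f => iff_of_true (by ext x <;> exact hE.elim x) (by ext x <;> exact hE.elim x))

/-- Equal encodings with parameters `(k, ..., 1)` give equal numbers of realisations of every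
atomic type on at most `k + 1` indices. -/
lemma sameCounts_of_rnpEnc_eq (k : ℕ) : ∀ {V₁ V₂ 𝒳 : Type} [Fintype V₁] [Fintype V₂]
    {G₁ : SimpleGraph V₁} {X₁ : V₁ → 𝒳} {G₂ : SimpleGraph V₂} {X₂ : V₂ → 𝒳},
    rnpEnc G₁ X₁ (down k) = rnpEnc G₂ X₂ (down k) → SameCounts (k + 1) G₁ X₁ G₂ X₂ := by
  induction k with
  | zero =>
    intro V₁ V₂ 𝒳 _ _ G₁ X₁ G₂ X₂ h
    obtain ⟨σ, hσ⟩ := exists_equiv_of_map_eq h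
    refine sameCounts_of_rooted σ fun W _ hW t w₀ hc v => ?_
    have hX : X₂ (σ v) = X₁ v := hσ v
    exact le_antisymm (rooted_le hX.symm (sameCounts_zero _ _ _ _) hW hc)
      (rooted_le hX (sameCounts_zero _ _ _ _) hW hc)
  | succ k ih =>
    intro V₁ V₂ 𝒳 _ _ G₁ X₁ G₂ X₂ h
    obtain ⟨σ, hσ⟩ := exists_equiv_of_map_eq h
    refine sameCounts_of_rooted σ fun W _ hW t w₀ hc v => ?_
    have hv := hσ v
    rw [down, rnpH_cons, rnpH_cons] at hv
    have hX : X₂ (σ v) = X₁ v := congrArg Prod.fst hv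
    have hS := @ih _ _ _ (Fintype.ofFinite _) (Fintype.ofFinite _) _ _ _ _ (congrArg Prod.snd hv)
    exact le_antisymm (rooted_le hX.symm hS.symm hW hc) (rooted_le hX hS hW hc)

/-! ### From tuples to induced subgraphs -/

/-- The attribute-preserving isomorphisms from `(G, X)` to `(H, Y)`. -/
abbrev AttrIsos {V W 𝒳 : Type} (G : SimpleGraph V) (X : V → 𝒳)
    (H : SimpleGraph W) (Y : W → 𝒳) : Type :=
  {φ : G ≃g H // ∀ v : V, Y (φ v) = X v}

lemma sigma_ext {V W 𝒳 : Type} {G : SimpleGraph V} {X : V → 𝒳} {H : SimpleGraph W}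
    {Y : W → 𝒳} {q q' : Σ S : Set V, AttrIsos (G.induce S) (fun u => X u.1) H Y}
    (h1 : q.1 = q'.1) (h2 : ∀ v h h', q.2.1 ⟨v, h⟩ = q'.2.1 ⟨v, h'⟩) : q = q' := by
  obtain ⟨S, φ, hφ⟩ := q
  obtain ⟨S', φ', hφ'⟩ := q'
  obtain rfl : S = S' := h1
  obtain rfl : φ = φ' := by
    ext v
    exact h2 v.1 v.2 v.2
  rfl

/-- A tuple realising the type of the identity tuple of `(H, Y)` is the same as a vertex set
with an isomorphism onto `(H, Y)`. -/
noncomputable def tupleEquiv {V W 𝒳 : Type} (G : SimpleGraph V) (X : V → 𝒳)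
    (H : SimpleGraph W) (Y : W → 𝒳) :
    {f : W → V // tp G X f = tp H Y id} ≃
      Σ S : Set V, AttrIsos (G.induce S) (fun u => X u.1) H Y where
  toFun f := ⟨Set.range f.1,
    ⟨(Equiv.ofInjective f.1 fun a b => ((tp_eq_iff.1 f.2).1 a b).1).symm, by
      intro a b
      obtain ⟨a, rfl⟩ := (Equiv.ofInjective f.1
        fun a b => ((tp_eq_iff.1 f.2).1 a b).1).surjective a
      obtain ⟨b, rfl⟩ := (Equiv.ofInjective f.1
        fun a b => ((tp_eq_iff.1 f.2).1 a b).1).surjective b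
      simp only [Equiv.symm_apply_apply]
      exact ((tp_eq_iff.1 f.2).2.1 a b).symm⟩, by
      intro a
      obtain ⟨a, rfl⟩ := (Equiv.ofInjective f.1
        fun a b => ((tp_eq_iff.1 f.2).1 a b).1).surjective a
      have hinj : Function.Injective f.1 := fun a b => ((tp_eq_iff.1 f.2).1 a b).1
      exact (congrArg Y ((Equiv.ofInjective f.1 hinj).symm_apply_apply a)).trans
        ((tp_eq_iff.1 f.2).2.2 a).symm⟩
  invFun q := ⟨fun w => (q.2.1.symm w).1, by
    rw [tp_eq_iff]
    refine ⟨fun a b => ?_, fun a b => ?_, fun a => ?_⟩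
    · rw [← Subtype.ext_iff]
      simp
    · exact q.2.1.symm.map_adj_iff
    · simpa using (q.2.2 (q.2.1.symm a)).symm⟩
  left_inv f := by
    ext w
    rfl
  right_inv := by
    rintro ⟨S, φ, hφ⟩
    have hS : Set.range (fun w => (φ.symm w).1) = S := by
      ext v
      constructor
      · rintro ⟨w, rfl⟩
        exact (φ.symm w).2
      · intro hv
        exact ⟨φ ⟨v, hv⟩, by simp⟩
    refine sigma_ext hS ?_
    rintro v ⟨w, rfl⟩ hv
    have hinj : Function.Injective fun w => (φ.symm w).1 :=
      Subtype.val_injective.comp φ.symm.injective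
    exact (Equiv.ofInjective_symm_apply hinj w).trans (φ.apply_symm_apply w).symm

/-- Each induced copy of `(H, Y)` comes from as many tuples as `(H, Y)` has automorphisms. -/
lemma cnt_eq_inducedCount_mul {V W 𝒳 : Type} (G : SimpleGraph V) (X : V → 𝒳)
    (H : SimpleGraph W) (Y : W → 𝒳) :
    cnt G X (tp H Y id) = inducedCount G X H Y * Nat.card (AttrIsos H Y H Y) := by
  rw [cnt, inducedCount, ← Nat.card_prod, Nat.card_congr (tupleEquiv G X H Y)]
  -- one isomorphism onto `(H, Y)` turns all of them into automorphisms of `(H, Y)`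
  have e : ∀ S : {S : Set V // AttrIso (G.induce S) (fun u => X u.1) H Y},
      Nonempty (AttrIsos (G.induce S.1) (fun u => X u.1) H Y ≃ AttrIsos H Y H Y) := by
    rintro ⟨S, φ, hφ⟩
    have hφ' : ∀ w, X (φ.symm w).1 = Y w := fun w => by simpa using (hφ (φ.symm w)).symm
    exact ⟨
      { toFun := fun ψ => ⟨φ.symm.trans ψ.1, fun w => (ψ.2 _).trans (hφ' w)⟩
        invFun := fun α => ⟨φ.trans α.1, fun v => (α.2 _).trans (hφ v)⟩
        left_inv := fun ψ => by ext v; simp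
        right_inv := fun α => by ext v; simp }⟩
  refine Nat.card_congr (Equiv.trans ?_ (Equiv.sigmaEquivProdOfEquiv fun S => (e S).some))
  exact
    { toFun := fun q => ⟨⟨q.1, q.2.1, q.2.2⟩, q.2⟩
      invFun := fun q => ⟨q.1.1, q.2⟩
      left_inv := fun _ => rfl
      right_inv := fun _ => rfl }

/-- For `r ≥ 2`, the RNP encoding with recursion parameters
`(r-1, r-2, ..., 1)` determines the induced subgraph count of every (possibly
disconnected) attributed graph `H` on `r` vertices. -/
theorem rnp_determines_all_r_vertex_counts {𝒳 : Type} [Countable 𝒳] {n r : ℕ}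
    (hr : 2 ≤ r) (G₁ G₂ : SimpleGraph (Fin n)) (X₁ X₂ : Fin n → 𝒳)
    (henc : rnpEnc G₁ X₁ (List.ofFn (fun i : Fin (r - 1) => r - 1 - (i : ℕ))) =
            rnpEnc G₂ X₂ (List.ofFn (fun i : Fin (r - 1) => r - 1 - (i : ℕ)))) :
    ∀ (H : SimpleGraph (Fin r)) (Y : Fin r → 𝒳),
      inducedCount G₁ X₁ H Y = inducedCount G₂ X₂ H Y := by
  intro H Y
  obtain ⟨k, rfl⟩ : ∃ k, r = k + 1 := ⟨r - 1, by omega⟩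
  rw [ofFn_eq_down] at henc
  change rnpEnc G₁ X₁ (down k) = rnpEnc G₂ X₂ (down k) at henc
  have h := sameCounts_of_rnpEnc_eq k henc (Fin (k + 1)) (by simp) (tp H Y id)
  rw [cnt_eq_inducedCount_mul, cnt_eq_inducedCount_mul] at h
  have : Nonempty (AttrIsos H Y H Y) := ⟨⟨SimpleGraph.Iso.refl, fun _ => rfl⟩⟩
  have : Finite (AttrIsos H Y H Y) := Finite.of_injective
    (fun φ : AttrIsos H Y H Y => φ.1.toEquiv) fun φ ψ h => Subtype.ext (RelIso.toEquiv_injective h)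
  exact Nat.eq_of_mul_eq_mul_right Nat.card_pos h
end

section
/- Let G be a simple graph on n vertices, let (r_1, ..., r_τ) be a sequence of positive integers with τ ≥ 1, and let c ≥ 1. Suppose every vertex v of G satisfies |N_{r_1}(v)| ≤ c, where N_{r_1}(v) is the set of vertices at distance at most r_1 from v. Then the number of node updates of recursive neighborhood pooling satisfies U(G, (r_1, ..., r_τ)) ≤ n · (1 + c + c² + ... + c^{τ-1}); in particular it is O(n c^τ). -/
/-!
The recursion only ever shrinks the vertex set, so a graph with at most `c` vertices needs at most
`c + c² + ... + c^k` updates for `k` recursion parameters, whatever the parameters are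
(`rnpUpdates_le_of_card_le`). The neighborhood hypothesis is needed at the first level only: each
of the `n` graphs `G_v` has at most `c` vertices, so the total is at most
`n + n * (c + ... + c^{τ-1})`.
-/

open Classical

noncomputable section

/-- The number of node updates performed by recursive neighborhood pooling:
`U(G, ()) = 0` and
`U(G, (r₁, ..., r_τ)) = |V(G)| + Σ_{v ∈ V(G)} U(G_v, (r₂, ..., r_τ))`, where `G_v` is
the induced subgraph of `G` on `N_{r₁}(v) \ {v}`. -/
noncomputable def rnpUpdates : (rs : List ℕ) → (V : Type) → (inst : Fintype V) →
    SimpleGraph V → ℕ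
  | [], _V, _inst, _G => 0
  | (r :: rs), V, inst, G =>
      letI : Fintype V := inst
      Fintype.card V + ∑ v : V,
        (let S : Set V := {u | (∃ w : G.Walk v u, w.length ≤ r) ∧ u ≠ v}
         letI instS : Fintype S := Fintype.ofFinite S
         rnpUpdates rs S instS (G.induce S))

/-- Bound in terms of the number of vertices alone: each vertex has at most `m` vertices in its
recursive subgraph simply because the whole graph does. -/
theorem rnpUpdates_le_of_card_le (m : ℕ) : ∀ (rs : List ℕ) (V : Type) (inst : Fintype V)
    (G : SimpleGraph V), Nat.card V ≤ m →
      rnpUpdates rs V inst G ≤ ∑ i ∈ Finset.range rs.length, m ^ (i + 1)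
  | [], _, _, _, _ => by simp [rnpUpdates]
  | (r :: rs), V, inst, G, h => by
      rw [Nat.card_eq_fintype_card] at h
      rw [rnpUpdates, List.length_cons, Finset.sum_range_succ', zero_add, pow_one, add_comm]
      refine add_le_add ?_ h
      refine (Finset.sum_le_card_nsmul _ _ (∑ i ∈ Finset.range rs.length, m ^ (i + 1)) ?_).trans ?_
      · intro v _
        refine rnpUpdates_le_of_card_le m rs _ _ _ ?_
        exact (Finite.card_subtype_le _).trans (Nat.card_eq_fintype_card.trans_le h)
      · rw [smul_eq_mul, Finset.card_univ]
        refine (Nat.mul_le_mul_right _ h).trans (le_of_eq ?_)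
        rw [Finset.mul_sum]
        exact Finset.sum_congr rfl fun i _ => by ring

/-- If every vertex `v` of `G` satisfies `|N_{r₁}(v)| ≤ c` (with `c ≥ 1`),
then the number of node updates of recursive neighborhood pooling with recursion
parameters `(r 1, ..., r τ)` is at most `n · (1 + c + c² + ... + c^{τ-1})`. -/
theorem rnp_updates_bound {n τ : ℕ} (hτ : 1 ≤ τ) (r : Fin τ → ℕ) (hr : ∀ i, 0 < r i)
    {c : ℕ} (hc : 1 ≤ c) (G : SimpleGraph (Fin n))
    (hball : ∀ v : Fin n,
      Nat.card {u : Fin n // ∃ w : G.Walk v u, w.length ≤ r ⟨0, hτ⟩} ≤ c) :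
    rnpUpdates (List.ofFn r) (Fin n) inferInstance G ≤
      n * ∑ i ∈ Finset.range τ, c ^ i := by
  obtain ⟨k, rfl⟩ : ∃ k, τ = k + 1 := ⟨τ - 1, by omega⟩
  rw [List.ofFn_succ, rnpUpdates, Finset.sum_range_succ', pow_zero, mul_add, mul_one, add_comm,
    Fintype.card_fin]
  refine Nat.add_le_add_right ?_ n
  refine (Finset.sum_le_card_nsmul _ _ (∑ i ∈ Finset.range k, c ^ (i + 1)) ?_).trans ?_
  · intro v _
    refine (rnpUpdates_le_of_card_le c _ _ _ _ ?_).trans (by rw [List.length_ofFn])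
    refine le_trans ?_ (hball v)
    exact Nat.card_le_card_of_injective (fun u => ⟨u.1, u.2.1⟩)
      fun a b hab => Subtype.ext (Subtype.mk.inj hab)
  · simp

end
end

section
/- Let n ≥ k ≥ 2, s ≥ 2, t ≥ 1, and let f be an (s,t)-good graph representation on simple graphs on n vertices, i.e., f(G) = Φ({{ ψ(G_1), ..., ψ(G_t) }}) where (G_1, ..., G_t) = Ξ(G) for an arbitrary function Ξ from graphs on n vertices to t-tuples of finite graphs, ψ is an arbitrary function from finite graphs to a set of cardinality s, and Φ is an arbitrary function on multisets. Suppose f counts k-cliques, i.e., for all simple graphs G_1, G_2 on n vertices, C(G_1; K_k) ≠ C(G_2; K_k) implies f(G_1) ≠ f(G_2). Then (t+1)^{s-1} ≥ |{ C(G; K_k) : G a simple graph on n vertices }| ≥ binom(π(⌊n/k⌋), k), where π(x) denotes the number of primes at most x. In particular, t = Ω̃(n^{k/(s-1)}). -/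
/-!
The two inequalities are independent of each other.

For the upper bound, `f G` depends only on the multiset of the `t` values `ψ (Ξ G i)`, and hence so
does the clique count. There are `binom (t + s - 1) (s - 1)` multisets of size `t`
over `s` letters (`Sym.card_sym_eq_choose`), and `choose_add_le` bounds this by
`(t + 1) ^ (s - 1)`.

For the lower bound, every set `P` of `k` primes that are at most `n / k` gives a complete
`k`-partite graph whose parts have the sizes `p ∈ P`. It has at most `k * (n / k) ≤ n` vertices, so
after adding isolated vertices it is a graph on `n` vertices; its `k`-cliques are the transversals
of the parts, so there are `∏ p ∈ P, p` of them (`exists_cliqueCount_eq_prod`). By unique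
factorization `P` is recovered from this product as its set of prime factors, so distinct sets `P`
give distinct clique counts.
-/

open Classical

noncomputable section

/-- A finite simple graph: a number of vertices together with a simple graph on them. -/
def FiniteGraph : Type := (m : ℕ) × SimpleGraph (Fin m)

/-- Unattributed induced subgraph count: the number of vertex subsets `S` of `G` whose
induced subgraph `G(S)` is isomorphic to `H`. -/
noncomputable def inducedCountU {V W : Type} (G : SimpleGraph V) (H : SimpleGraph W) : ℕ :=
  Nat.card {S : Set V // Nonempty (G.induce S ≃g H)}

/-- The number of `k`-cliques `C(G; K_k)` of a graph `G`. -/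
noncomputable def cliqueCount {n : ℕ} (k : ℕ) (G : SimpleGraph (Fin n)) : ℕ :=
  inducedCountU G (⊤ : SimpleGraph (Fin k))

/-- A vertex subset induces a copy of `K_k` exactly when it is a `k`-clique, so `cliqueCount`
agrees with the number of cliques in the sense of `SimpleGraph.cliqueFinset`. -/
lemma cliqueCount_eq_card {n : ℕ} (k : ℕ) (G : SimpleGraph (Fin n)) :
    cliqueCount k G = (G.cliqueFinset k).card := by
  have key : ∀ s : Finset (Fin n),
      Nonempty (G.induce (s : Set (Fin n)) ≃g (⊤ : SimpleGraph (Fin k))) ↔ G.IsNClique k s := by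
    intro s
    rw [SimpleGraph.isNClique_iff, ← SimpleGraph.induce_eq_top]
    constructor
    · rintro ⟨e⟩
      refine ⟨?_, by simpa using Fintype.card_congr e.toEquiv⟩
      ext a b
      rw [← e.map_adj_iff]
      simp
    · rintro ⟨h, hc⟩
      rw [h]
      exact ⟨SimpleGraph.Iso.completeGraph (Fintype.equivFinOfCardEq (by simpa using hc))⟩
  unfold cliqueCount inducedCountU
  rw [← Nat.card_eq_finsetCard]
  refine Nat.card_congr (Equiv.symm ?_)
  refine Equiv.subtypeEquiv Fintype.finsetEquivSet fun s => ?_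
  rw [SimpleGraph.mem_cliqueFinset_iff, ← key s]
  rfl

/-- The cliques of a complete multipartite graph with as many vertices as parts are the transversals
of its parts. -/
lemma card_cliqueFinset_completeMultipartite {ι : Type} [Fintype ι] (V : ι → Type)
    [∀ i, Fintype (V i)] :
    ((SimpleGraph.completeMultipartiteGraph V).cliqueFinset (Fintype.card ι)).card
      = ∏ i, Fintype.card (V i) := by
  rw [← Fintype.card_pi, ← Finset.card_univ]
  symm
  refine Finset.card_bij
    (fun g _ => Finset.univ.map ⟨fun i => (⟨i, g i⟩ : Σ i, V i), fun i j h => congrArg Sigma.fst h⟩)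
    ?_ ?_ ?_
  · intro g _
    rw [SimpleGraph.mem_cliqueFinset_iff, SimpleGraph.isNClique_iff]
    refine ⟨?_, by simp⟩
    intro a ha b hb hab
    simp only [Finset.coe_map, Finset.coe_univ, Set.image_univ, Set.mem_range] at ha hb
    obtain ⟨i, rfl⟩ := ha
    obtain ⟨j, rfl⟩ := hb
    have hij : i ≠ j := by
      rintro rfl
      exact hab rfl
    exact hij
  · intro g _ g' _ h
    funext i
    have hi : (⟨i, g i⟩ : Σ i, V i) ∈ Finset.univ.map
        ⟨fun i => (⟨i, g' i⟩ : Σ i, V i), fun i j h => congrArg Sigma.fst h⟩ := by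
      rw [← h]
      exact Finset.mem_map.2 ⟨i, Finset.mem_univ i, rfl⟩
    obtain ⟨j, -, hj⟩ := Finset.mem_map.1 hi
    obtain ⟨rfl, hj⟩ := Sigma.mk.inj hj
    exact (eq_of_heq hj).symm
  · intro S hS
    rw [SimpleGraph.mem_cliqueFinset_iff, SimpleGraph.isNClique_iff] at hS
    obtain ⟨hS, hc⟩ := hS
    have hinj : Set.InjOn Sigma.fst (S : Set (Σ i, V i)) := by
      intro a ha b hb hab
      by_contra hne
      exact hS ha hb hne hab
    -- The clique meets each part at most once and has as many vertices as there are parts.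
    have hsurj : S.image Sigma.fst = Finset.univ :=
      Finset.eq_univ_of_card _ ((Finset.card_image_of_injOn hinj).trans hc)
    have hex : ∀ i, ∃ x : V i, (⟨i, x⟩ : Σ i, V i) ∈ S := by
      intro i
      obtain ⟨⟨j, x⟩, hx, rfl⟩ := Finset.mem_image.1 (hsurj ▸ Finset.mem_univ i)
      exact ⟨x, hx⟩
    choose g hg using hex
    refine ⟨g, Finset.mem_univ _, Finset.eq_of_subset_of_card_le ?_ (by simp [hc])⟩
    intro a ha
    obtain ⟨i, -, rfl⟩ := Finset.mem_map.1 ha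
    exact hg i

/-- The complete multipartite graph with part sizes `p ∈ P`, padded with isolated vertices, has
`∏ p ∈ P, p` cliques of size `#P`. The assumption `2 ≤ k` ensures that the isolated vertices lie in
no `k`-clique. -/
lemma exists_cliqueCount_eq_prod {n k : ℕ} (hk : 2 ≤ k) (P : Finset ℕ) (hP : P.card = k)
    (hle : ∀ p ∈ P, p ≤ n / k) :
    ∃ G : SimpleGraph (Fin n), cliqueCount k G = ∏ p ∈ P, p := by
  have hcard : Fintype.card (Σ p : P, Fin p) ≤ Fintype.card (Fin n) := by
    rw [Fintype.card_sigma, Fintype.card_fin]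
    simp only [Fintype.card_fin]
    rw [Finset.sum_coe_sort P (fun p => p)]
    calc ∑ p ∈ P, p ≤ P.card • (n / k) := Finset.sum_le_card_nsmul _ _ _ hle
      _ = k * (n / k) := by rw [hP, smul_eq_mul]
      _ ≤ n := Nat.mul_div_le n k
  obtain ⟨e⟩ := Function.Embedding.nonempty_of_card_le hcard
  refine ⟨(SimpleGraph.completeMultipartiteGraph fun p : P => Fin p).map e, ?_⟩
  rw [cliqueCount_eq_card]
  have h := card_cliqueFinset_completeMultipartite fun p : P => Fin p
  simp only [Fintype.card_coe, Fintype.card_fin, hP] at h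
  rw [Finset.prod_coe_sort P (fun p => p)] at h
  rw [← h, ← Finset.card_map ⟨Finset.map e, Finset.map_injective e⟩]
  convert congrArg Finset.card (SimpleGraph.cliqueFinset_map
    (SimpleGraph.completeMultipartiteGraph fun p : P => Fin p) (n := k) e (by omega))

lemma choose_add_le (t d : ℕ) : (t + d).choose d ≤ (t + 1) ^ d := by
  induction d with
  | zero => simp
  | succ d ih =>
    have h := Nat.add_one_mul_choose_eq (t + d) d
    refine Nat.le_of_mul_le_mul_right (c := d + 1) ?_ (Nat.succ_pos d)
    calc (t + (d + 1)).choose (d + 1) * (d + 1) = (t + d + 1) * (t + d).choose d := h.symm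
      _ ≤ ((t + 1) * (d + 1)) * (t + 1) ^ d := Nat.mul_le_mul (by nlinarith) ih
      _ = (t + 1) ^ (d + 1) * (d + 1) := by ring

/-- Any `(s,t)`-good graph representation
`f(G) = Φ({{ ψ(G₁), ..., ψ(G_t) }})` (where `(G₁, ..., G_t) = Ξ(G)` and `ψ` takes values
in a set of cardinality `s`) that counts `k`-cliques on graphs with `n ≥ k ≥ 2` vertices
must satisfy `(t+1)^{s-1} ≥ |{C(G; K_k) : G}| ≥ binom(π(⌊n/k⌋), k)`. -/
theorem good_representation_lower_bound {n k s t : ℕ} (hk : 2 ≤ k) (hn : k ≤ n)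
    (hs : 2 ≤ s) (ht : 1 ≤ t) {C B : Type} (hC : Nat.card C = s)
    (Ξ : SimpleGraph (Fin n) → Fin t → FiniteGraph)
    (ψ : FiniteGraph → C) (Φ : Multiset C → B)
    (f : SimpleGraph (Fin n) → B)
    (hf : ∀ G, f G = Φ ((Finset.univ : Finset (Fin t)).val.map (fun i => ψ (Ξ G i))))
    (hcount : ∀ G₁ G₂ : SimpleGraph (Fin n),
      cliqueCount k G₁ ≠ cliqueCount k G₂ → f G₁ ≠ f G₂) :
    Nat.choose (Nat.primeCounting (n / k)) k ≤
        Nat.card (Set.range (fun G : SimpleGraph (Fin n) => cliqueCount k G)) ∧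
      Nat.card (Set.range (fun G : SimpleGraph (Fin n) => cliqueCount k G)) ≤
        (t + 1) ^ (s - 1) := by
  constructor
  · set Q := (Finset.range (n / k + 1)).filter Nat.Prime with hQ
    have hcQ : Q.card = Nat.primeCounting (n / k) := by
      rw [hQ, Nat.primeCounting, Nat.primeCounting', Nat.count_eq_card_filter_range]
    have hQk : ∀ P ∈ Q.powersetCard k, P.card = k ∧ ∀ p ∈ P, p ≤ n / k ∧ p.Prime := by
      intro P hP
      obtain ⟨hPQ, hPk⟩ := Finset.mem_powersetCard.1 hP
      refine ⟨hPk, fun p hp => ?_⟩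
      have hpQ := hPQ hp
      rw [hQ, Finset.mem_filter, Finset.mem_range] at hpQ
      exact ⟨by omega, hpQ.2⟩
    rw [← hcQ, ← Finset.card_powersetCard, Nat.card_coe_set_eq,
      ← Set.ncard_coe_finset (Q.powersetCard k)]
    refine Set.ncard_le_ncard_of_injOn (fun P : Finset ℕ => ∏ p ∈ P, p) ?_ ?_ (Set.finite_range _)
    · intro P hP
      obtain ⟨hPk, hP⟩ := hQk P hP
      exact exists_cliqueCount_eq_prod hk P hPk fun p hp => (hP p hp).1
    · intro P hP P' hP' h
      have h1 := Nat.primeFactors_prod fun p hp => ((hQk P hP).2 p hp).2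
      have h2 := Nat.primeFactors_prod fun p hp => ((hQk P' hP').2 p hp).2
      rw [← h1, ← h2]
      exact congrArg Nat.primeFactors h
  · have : Finite C := Nat.finite_of_card_ne_zero (by omega)
    have := Fintype.ofFinite C
    let m : SimpleGraph (Fin n) → Sym C t := fun G =>
      ⟨(Finset.univ : Finset (Fin t)).val.map (fun i => ψ (Ξ G i)), by simp⟩
    have hm : ∀ G₁ G₂, m G₁ = m G₂ → cliqueCount k G₁ = cliqueCount k G₂ := by
      intro G₁ G₂ h
      by_contra hne
      refine hcount G₁ G₂ hne ?_
      rw [hf, hf]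
      exact congrArg Φ (congrArg Subtype.val h)
    -- Choosing a graph for each clique count makes `m` injective on the set of clique counts.
    have hinj : Function.Injective
        fun c : Set.range (fun G : SimpleGraph (Fin n) => cliqueCount k G) =>
          m c.2.choose := by
      intro c c' h
      apply Subtype.ext
      rw [← c.2.choose_spec, ← c'.2.choose_spec]
      exact hm _ _ h
    refine (Nat.card_le_card_of_injective _ hinj).trans ?_
    rw [Nat.card_eq_fintype_card, Sym.card_sym_eq_choose, ← Nat.card_eq_fintype_card, hC]
    have hst : s + t - 1 = t + (s - 1) := by omega
    rw [hst, Nat.choose_symm_add]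
    exact choose_add_le t (s - 1)

end
end

section
/- For all integers n ≥ 1 and k ≥ 2, the number of distinct values taken by the k-clique count over all simple graphs on n vertices satisfies |{ C(G; K_k) : G a simple graph on n vertices }| ≥ binom(π(⌊n/k⌋), k), where π(x) is the number of primes at most x. Consequently, for n sufficiently large, this cardinality is at least (c n/(k log(n/k)) − k)^k / k! for an absolute constant c, i.e., Ω̃(n^k). -/
/-!
Given a set `P` of `k` primes, each at most `n / k`, their sum is at most `n`, so the complete
`k`-partite graph whose parts have the elements of `P` as sizes embeds into `n` vertices, the
remaining vertices being isolated. A `k`-clique is a choice of one vertex from each part (here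
`k ≥ 2` rules out the isolated vertices), so the clique count is the product of the primes in `P`
(`cliqueCount_multipartite`). By unique factorization different `P` give different counts, which
yields the binomial lower bound (`choose_primeCounting_le`).

The asymptotic form, with `c = 1 / 2`, follows from Chebyshev's lower bound
`((x - 1) log 2 - log (x + 2)) / log x ≤ π(x)`, where `log 2 > 1 / 2`, together with
`(m + 1 - k) ^ k / k! ≤ binom(m, k)`.
-/

open Classical

noncomputable section

open Filter

/-- The complete multipartite graph with part sizes `f i`, placed on the vertex set `V` by the
embedding `e`; vertices outside the range of `e` are isolated. -/
def multipartite {k : ℕ} {V : Type} (f : Fin k → ℕ) (e : (Σ i, Fin (f i)) ↪ V) : SimpleGraph V :=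
  (SimpleGraph.completeMultipartiteGraph (fun i => Fin (f i))).map e

lemma multipartite_adj {k : ℕ} {V : Type} (f : Fin k → ℕ) (e : (Σ i, Fin (f i)) ↪ V)
    (x y : Σ i, Fin (f i)) : (multipartite f e).Adj (e x) (e y) ↔ x.1 ≠ y.1 := by
  simp [multipartite]

/-- A `k`-clique amounts to a choice of one vertex from each of the `k` parts. -/
lemma cliqueCount_multipartite {n k : ℕ} (hk : 2 ≤ k) (f : Fin k → ℕ)
    (e : (Σ i, Fin (f i)) ↪ Fin n) : cliqueCount k (multipartite f e) = ∏ i, f i := by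
  have hinj : ∀ g : ∀ i, Fin (f i), Function.Injective (fun i => e ⟨i, g i⟩) := by
    intro g i j hij
    exact congrArg Sigma.fst (e.injective hij)
  have hiso : ∀ g : ∀ i, Fin (f i),
      Nonempty ((multipartite f e).induce (Set.range fun i => e ⟨i, g i⟩) ≃g
        (⊤ : SimpleGraph (Fin k))) := by
    intro g
    refine ⟨RelIso.symm ⟨Equiv.ofInjective _ (hinj g), ?_⟩⟩
    intro a b
    simp [multipartite_adj]
  let F : (∀ i, Fin (f i)) → {S : Set (Fin n) //
      Nonempty ((multipartite f e).induce S ≃g (⊤ : SimpleGraph (Fin k)))} :=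
    fun g => ⟨Set.range fun i => e ⟨i, g i⟩, hiso g⟩
  have hF : Function.Bijective F := by
    constructor
    · intro g g' h
      have h' : (Set.range fun i => e ⟨i, g i⟩) = Set.range fun i => e ⟨i, g' i⟩ :=
        congrArg Subtype.val h
      funext i
      have : e ⟨i, g i⟩ ∈ Set.range fun i => e ⟨i, g' i⟩ := h' ▸ ⟨i, rfl⟩
      obtain ⟨j, hj⟩ := this
      have hs := e.injective hj
      obtain rfl : j = i := congrArg Sigma.fst hs
      exact (eq_of_heq (Sigma.mk.inj hs).2).symm
    · rintro ⟨S, ⟨ψ⟩⟩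
      have hadj : ∀ i j, i ≠ j → (multipartite f e).Adj (ψ.symm i) (ψ.symm j) := by
        intro i j hij
        have := ψ.symm.map_rel_iff (a := i) (b := j)
        simp only [SimpleGraph.top_adj] at this
        exact this.2 hij
      have hx : ∀ i, ∃ x, e x = (ψ.symm i : Fin n) := by
        intro i
        -- `2 ≤ k` provides a second clique vertex, so the given one is not isolated
        have : Nontrivial (Fin k) := Fin.nontrivial_iff_two_le.2 hk
        obtain ⟨j, hj⟩ := exists_ne i
        obtain ⟨u, v, -, hu, -⟩ := (SimpleGraph.map_adj _ _ _ _).1 (hadj i j hj.symm)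
        exact ⟨u, hu⟩
      choose x hx using hx
      have hφ : Function.Injective (fun i => (x i).1) := by
        intro i j hij
        by_contra hne
        have h := hadj i j hne
        rw [← hx, ← hx, multipartite_adj] at h
        exact h hij
      have hsurj := Finite.surjective_of_injective hφ
      -- the clique meets every part, in a unique vertex
      have hy : ∀ i, ∃ a : Fin (f i), ∃ j, x j = ⟨i, a⟩ := by
        intro i
        obtain ⟨j, rfl⟩ := hsurj i
        exact ⟨(x j).2, j, rfl⟩
      choose y t ht using hy
      refine ⟨y, Subtype.ext ?_⟩
      ext s
      constructor
      · rintro ⟨i, rfl⟩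
        have : e ⟨i, y i⟩ = (ψ.symm (t i) : Fin n) := by rw [← ht, hx]
        simp only [this]
        exact (ψ.symm (t i)).2
      · intro hs
        refine ⟨(x (ψ ⟨s, hs⟩)).1, ?_⟩
        have h1 := ht (x (ψ ⟨s, hs⟩)).1
        have h2 : t (x (ψ ⟨s, hs⟩)).1 = ψ ⟨s, hs⟩ := hφ (by simp only [h1])
        simp only
        rw [← h1, h2, hx]
        simp
  rw [cliqueCount, inducedCountU, ← Nat.card_congr (Equiv.ofBijective F hF)]
  simp

/-- The parts fit into `n` vertices because `k * (n / k) ≤ n`; primality plays no role here. -/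
lemma prod_mem_range_cliqueCount {n k : ℕ} (hk : 2 ≤ k) (P : Finset ℕ) (hP : P.card = k)
    (hle : ∀ p ∈ P, p ≤ n / k) :
    ∏ p ∈ P, p ∈ Set.range (fun G : SimpleGraph (Fin n) => cliqueCount k G) := by
  let E := P.equivFinOfCardEq hP
  let f : Fin k → ℕ := fun i => (E.symm i : ℕ)
  have hcard : Fintype.card (Σ i, Fin (f i)) ≤ Fintype.card (Fin n) := by
    simp only [Fintype.card_sigma, Fintype.card_fin]
    calc ∑ i, f i ≤ ∑ _i : Fin k, n / k := Finset.sum_le_sum fun i _ => hle _ (E.symm i).2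
      _ = k * (n / k) := by simp
      _ ≤ n := Nat.mul_div_le n k
  obtain ⟨e⟩ := Function.Embedding.nonempty_of_card_le hcard
  refine ⟨multipartite f e, ?_⟩
  simp only [cliqueCount_multipartite hk]
  rw [← Finset.prod_coe_sort P]
  exact Equiv.prod_comp E.symm (fun p : P => (p : ℕ))

/-- A set of primes is recovered from its product as the set of prime factors, so distinct
`k`-sets of primes up to `n / k` realize distinct clique counts. -/
lemma choose_primeCounting_le (n k : ℕ) (hk : 2 ≤ k) :
    Nat.choose (Nat.primeCounting (n / k)) k ≤
      Nat.card (Set.range (fun G : SimpleGraph (Fin n) => cliqueCount k G)) := by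
  have hprime : ∀ P ∈ (Nat.primesLE (n / k)).powersetCard k, ∀ p ∈ P, p ≤ n / k ∧ p.Prime := by
    intro P hP p hp
    exact Nat.mem_primesLE.1 ((Finset.mem_powersetCard.1 hP).1 hp)
  have hinj : Set.InjOn (fun P : Finset ℕ => ∏ p ∈ P, p)
      ((Nat.primesLE (n / k)).powersetCard k : Set (Finset ℕ)) := by
    intro P hP Q hQ h
    rw [← Nat.primeFactors_prod fun p hp => (hprime P hP p hp).2,
      ← Nat.primeFactors_prod fun p hp => (hprime Q hQ p hp).2]
    exact congrArg Nat.primeFactors h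
  rw [← Nat.primesLE_card_eq_primeCounting, ← Finset.card_powersetCard,
    ← Finset.card_image_of_injOn hinj, Nat.card_coe_set_eq, ← Set.ncard_coe_finset]
  refine Set.ncard_le_ncard ?_ (Set.finite_range _)
  intro v hv
  obtain ⟨P, hP, rfl⟩ := Finset.mem_image.1 (Finset.mem_coe.1 hv)
  exact prod_mem_range_cliqueCount hk P (Finset.mem_powersetCard.1 hP).2
    fun p hp => (hprime P hP p hp).1

/-- A Chebyshev-type bound: as `log 2 > 1 / 2`, the term `log (x + 2) = o(x)` in Mathlib's
estimate is absorbed by lowering the constant. -/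
lemma eventually_half_div_log_le_primeCounting :
    ∀ᶠ x : ℝ in atTop, 1 / 2 * x / Real.log x ≤ Nat.primeCounting ⌊x⌋₊ := by
  have h := (Real.isLittleO_log_id_atTop.bound (c := 1 / 20) (by norm_num))
  filter_upwards [(tendsto_atTop_add_const_right atTop (2 : ℝ) tendsto_id).eventually h,
    eventually_ge_atTop (10 : ℝ)] with x hx hx10
  refine le_trans ?_ (Chebyshev.pi_ge' (by linarith))
  have hlog : 0 < Real.log x := Real.log_pos (by linarith)
  simp only [id, Real.norm_eq_abs] at hx
  rw [abs_of_nonneg (by linarith : 0 ≤ x + 2)] at hx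
  have h1 := (le_abs_self _).trans hx
  have h2 := Real.log_two_gt_d9
  gcongr
  nlinarith

lemma eventually_le_half_div_log (K : ℝ) :
    ∀ᶠ x : ℝ in atTop, K ≤ 1 / 2 * x / Real.log x := by
  have h := (Real.isLittleO_log_id_atTop.bound (c := 1 / (2 * (|K| + 1))) (by positivity))
  filter_upwards [h, eventually_gt_atTop (1 : ℝ)] with x hx hx1
  have hlog : 0 < Real.log x := Real.log_pos hx1
  simp only [id, Real.norm_eq_abs] at hx
  rw [abs_of_pos hlog, abs_of_pos (by linarith : 0 < x), div_mul_eq_mul_div,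
    le_div_iff₀ (by positivity)] at hx
  rw [le_div_iff₀ hlog]
  nlinarith [mul_le_mul_of_nonneg_right (le_abs_self K) hlog.le]

/-- For all `n ≥ 1` and `k ≥ 2`, the number of distinct values taken by
the `k`-clique count over simple graphs on `n` vertices is at least
`binom(π(⌊n/k⌋), k)`; consequently, there is an absolute constant `c > 0` such that for
every `k ≥ 2` and all sufficiently large `n` this cardinality is at least
`(c·n/(k·log(n/k)) − k)^k / k!`. -/
theorem cliqueCount_range_lower_bound :
    (∀ n k : ℕ, 1 ≤ n → 2 ≤ k →
      Nat.choose (Nat.primeCounting (n / k)) k ≤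
        Nat.card (Set.range (fun G : SimpleGraph (Fin n) => cliqueCount k G))) ∧
    ∃ c : ℝ, 0 < c ∧ ∀ k : ℕ, 2 ≤ k → ∃ N : ℕ, ∀ n : ℕ, N ≤ n →
      ((c * n / (k * Real.log ((n : ℝ) / k)) - k) ^ k / (Nat.factorial k) : ℝ) ≤
        Nat.card (Set.range (fun G : SimpleGraph (Fin n) => cliqueCount k G)) := by
  refine ⟨fun n k _ hk => choose_primeCounting_le n k hk, 1 / 2, by norm_num, fun k hk => ?_⟩
  have hk0 : (0 : ℝ) < k := by exact_mod_cast (by omega : 0 < k)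
  have htend : Tendsto (fun n : ℕ => (n : ℝ) / k) atTop atTop :=
    tendsto_natCast_atTop_atTop.atTop_div_const hk0
  obtain ⟨N, hN⟩ := eventually_atTop.1 (htend.eventually
    (eventually_half_div_log_le_primeCounting.and (eventually_le_half_div_log k)))
  refine ⟨N, fun n hn => ?_⟩
  obtain ⟨h1, h2⟩ := hN n hn
  rw [Nat.floor_div_natCast, Nat.floor_natCast] at h1
  have hx : 1 / 2 * (n : ℝ) / (k * Real.log ((n : ℝ) / k))
      = 1 / 2 * ((n : ℝ) / k) / Real.log ((n : ℝ) / k) := by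
    rw [← mul_div_assoc, div_div]
  rw [hx]
  have hsub : ((Nat.primeCounting (n / k) : ℝ) - k) ≤
      ((Nat.primeCounting (n / k) + 1 - k : ℕ) : ℝ) := by
    have : Nat.primeCounting (n / k) ≤ (Nat.primeCounting (n / k) + 1 - k) + k := by omega
    have : (Nat.primeCounting (n / k) : ℝ) ≤ (Nat.primeCounting (n / k) + 1 - k : ℕ) + k := by
      exact_mod_cast this
    linarith
  calc _ ≤ ((Nat.primeCounting (n / k) + 1 - k : ℕ) ^ k : ℝ) / (Nat.factorial k) := by
        refine div_le_div_of_nonneg_right (pow_le_pow_left₀ ?_ ?_ k) (by positivity)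
        -- by `h2` the base on the left is nonnegative, so powers may be compared
        · linarith
        · linarith
    _ ≤ (Nat.choose (Nat.primeCounting (n / k)) k : ℝ) := Nat.pow_le_choose k _
    _ ≤ _ := by exact_mod_cast choose_primeCounting_le n k hk


end
end
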